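/- Let A be a connected Nakayama algebra. If there exists a simple module S such that pd S is finite and even, or such that pd IS is finite and odd, then A has finite global dimension. -/

import Mathlib

open CategoryTheory CategoryTheory.Limits

noncomputable section

namespace ArtinAlg

variable (A : Type) [Ring A]

/-- `M` admits a projective resolution of length at most `n`. -/
inductive ProjDimLE : ℕ → ModuleCat.{0} A → Prop
  | zero (M : ModuleCat.{0} A) (h : Projective M) : ProjDimLE 0 M
  | succ (n : ℕ) (M P : ModuleCat.{0} A) (f : P ⟶ M) (hP : Projective P) (hf : Epi f)
      (h : ProjDimLE n (kernel f)) : ProjDimLE (n + 1) M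

/-- `M` admits an injective coresolution of length at most `n`. -/
inductive InjDimLE : ℕ → ModuleCat.{0} A → Prop
  | zero (M : ModuleCat.{0} A) (h : Injective M) : InjDimLE 0 M
  | succ (n : ℕ) (M I : ModuleCat.{0} A) (f : M ⟶ I) (hI : Injective I) (hf : Mono f)
      (h : InjDimLE n (cokernel f)) : InjDimLE (n + 1) M

/-- The projective dimension `pd M ∈ ℕ∞`. -/
def projDim (M : ModuleCat.{0} A) : ℕ∞ :=
  sInf {d : ℕ∞ | ∃ n : ℕ, d = n ∧ ProjDimLE A n M}

/-- The injective dimension `id M ∈ ℕ∞`. -/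
def injDim (M : ModuleCat.{0} A) : ℕ∞ :=
  sInf {d : ℕ∞ | ∃ n : ℕ, d = n ∧ InjDimLE A n M}

/-- `f : P ⟶ M` is a projective cover: `P` is projective and `f` is an essential
(superfluous) epimorphism. -/
def IsProjectiveCoverHom {P M : ModuleCat.{0} A} (f : P ⟶ M) : Prop :=
  Projective P ∧ Epi f ∧ ∀ (N : ModuleCat.{0} A) (g : N ⟶ P), Epi (g ≫ f) → Epi g

/-- `P` is a projective cover of `M`. -/
def IsProjCoverOf (M P : ModuleCat.{0} A) : Prop :=
  ∃ f : P ⟶ M, IsProjectiveCoverHom A f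

/-- `f : M ⟶ I` is an injective envelope: `I` is injective and `f` is an essential
monomorphism. -/
def IsInjectiveEnvelopeHom {M I : ModuleCat.{0} A} (f : M ⟶ I) : Prop :=
  Injective I ∧ Mono f ∧ ∀ (N : ModuleCat.{0} A) (g : I ⟶ N), Mono (f ≫ g) → Mono g

/-- `I` is an injective envelope of `M`. -/
def IsInjEnvOf (M I : ModuleCat.{0} A) : Prop :=
  ∃ f : M ⟶ I, IsInjectiveEnvelopeHom A f

/-- `X ≅ Ω M`, the kernel of a projective cover of `M`. -/
def IsSyzygyOf (M X : ModuleCat.{0} A) : Prop :=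
  ∃ (P : ModuleCat.{0} A) (f : P ⟶ M), IsProjectiveCoverHom A f ∧ Nonempty (X ≅ kernel f)

/-- `X ≅ Σ M`, the cokernel of an injective envelope of `M`. -/
def IsCosyzygyOf (M X : ModuleCat.{0} A) : Prop :=
  ∃ (I : ModuleCat.{0} A) (f : M ⟶ I), IsInjectiveEnvelopeHom A f ∧ Nonempty (X ≅ cokernel f)

/-- `X ≅ Ω^n M`. -/
def IsNthSyzygy : ℕ → ModuleCat.{0} A → ModuleCat.{0} A → Prop
  | 0, M, X => Nonempty (X ≅ M)
  | n + 1, M, X => ∃ Y, IsSyzygyOf A M Y ∧ IsNthSyzygy n Y X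

/-- `X ≅ Σ^n M`. -/
def IsNthCosyzygy : ℕ → ModuleCat.{0} A → ModuleCat.{0} A → Prop
  | 0, M, X => Nonempty (X ≅ M)
  | n + 1, M, X => ∃ Y, IsCosyzygyOf A M Y ∧ IsNthCosyzygy n Y X

/-- `X` is a direct summand of `Y`. -/
def IsDirectSummandOf (X Y : ModuleCat.{0} A) : Prop :=
  ∃ (i : X ⟶ Y) (r : Y ⟶ X), i ≫ r = 𝟙 X

/-- `X ∈ add W` : `X` is a direct summand of a finite direct sum of copies of `W`. -/
def InAdd (X W : ModuleCat.{0} A) : Prop :=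
  ∃ n : ℕ, IsDirectSummandOf A X (ModuleCat.of A (Fin n → ↥W))

/-- The delooping level of `M` is at most `d` :
`Ω^d M ∈ add (A ⊕ Ω^{d+1} M')` for some finitely generated `M'`. -/
def DelLE (d : ℕ) (M : ModuleCat.{0} A) : Prop :=
  ∃ X, IsNthSyzygy A d M X ∧
    ∃ M' : ModuleCat.{0} A, Module.Finite A ↥M' ∧
      ∃ X', IsNthSyzygy A (d + 1) M' X' ∧ InAdd A X (ModuleCat.of A (A × ↥X'))

/-- The delooping level `del M ∈ ℕ∞`. -/
def delLevel (M : ModuleCat.{0} A) : ℕ∞ :=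
  sInf {d : ℕ∞ | ∃ n : ℕ, d = n ∧ DelLE A n M}

/-- The delooping level of the algebra: the supremum of `del S` over the simple modules. -/
def delAlg : ℕ∞ :=
  sSup {d : ℕ∞ | ∃ S : ModuleCat.{0} A, IsSimpleModule A ↥S ∧ delLevel A S = d}

/-- `Q` is a minimal injective cogenerator: the injective envelope of the direct sum of
a complete set of representatives of the simple modules. -/
def IsMinimalInjectiveCogenerator (Q : ModuleCat.{0} A) : Prop :=
  ∃ (ι : Type) (_ : Fintype ι) (S : ι → ModuleCat.{0} A),
    (∀ i, IsSimpleModule A ↥(S i)) ∧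
    (∀ T : ModuleCat.{0} A, IsSimpleModule A ↥T → ∃! i, Nonempty (↥T ≃ₗ[A] ↥(S i))) ∧
    IsInjEnvOf A (ModuleCat.of A (∀ i, ↥(S i))) Q

/-- The desuspending level of `M` is at most `d` :
`Σ^d M ∈ add (D(A) ⊕ Σ^{d+1} M')` for some finitely generated `M'`. -/
def DesLE (d : ℕ) (M : ModuleCat.{0} A) : Prop :=
  ∃ X, IsNthCosyzygy A d M X ∧
    ∃ Q, IsMinimalInjectiveCogenerator A Q ∧
      ∃ M' : ModuleCat.{0} A, Module.Finite A ↥M' ∧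
        ∃ X', IsNthCosyzygy A (d + 1) M' X' ∧ InAdd A X (ModuleCat.of A (↥Q × ↥X'))

/-- The desuspending level `des M ∈ ℕ∞`. -/
def desLevel (M : ModuleCat.{0} A) : ℕ∞ :=
  sInf {d : ℕ∞ | ∃ n : ℕ, d = n ∧ DesLE A n M}

/-- The desuspending level of the algebra. -/
def desAlg : ℕ∞ :=
  sSup {d : ℕ∞ | ∃ S : ModuleCat.{0} A, IsSimpleModule A ↥S ∧ desLevel A S = d}

/-- The (small) finitistic projective dimension `fin-pro A`. -/
def finProDim : ℕ∞ :=
  sSup {d : ℕ∞ | ∃ M : ModuleCat.{0} A, Module.Finite A ↥M ∧ projDim A M = d ∧ d ≠ ⊤}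

/-- The (small) finitistic injective dimension `fin-inj A`. -/
def finInjDim : ℕ∞ :=
  sSup {d : ℕ∞ | ∃ M : ModuleCat.{0} A, Module.Finite A ↥M ∧ injDim A M = d ∧ d ≠ ⊤}

/-- The big finitistic projective dimension `Fin-pro A`. -/
def bigFinProDim : ℕ∞ :=
  sSup {d : ℕ∞ | ∃ M : ModuleCat.{0} A, projDim A M = d ∧ d ≠ ⊤}

/-- The big finitistic injective dimension `Fin-inj A`. -/
def bigFinInjDim : ℕ∞ :=
  sSup {d : ℕ∞ | ∃ M : ModuleCat.{0} A, injDim A M = d ∧ d ≠ ⊤}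

/-- `M` is an indecomposable nonzero module. -/
def Indec (M : ModuleCat.{0} A) : Prop :=
  Nontrivial ↥M ∧ ∀ (N₁ N₂ : Submodule A ↥M), IsCompl N₁ N₂ → N₁ = ⊥ ∨ N₂ = ⊥

/-- `M` is serial (uniserial): its submodules form a chain. -/
def IsUniserial (M : ModuleCat.{0} A) : Prop :=
  ∀ N₁ N₂ : Submodule A ↥M, N₁ ≤ N₂ ∨ N₂ ≤ N₁

/-- `A` is a Nakayama algebra: all finitely generated indecomposable modules are serial. -/
def IsNakayama : Prop :=
  ∀ M : ModuleCat.{0} A, Module.Finite A ↥M → Indec A M → IsUniserial A M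

/-- `A` is connected: it is not a nontrivial product of algebras. -/
def IsConnectedAlgebra : Prop :=
  Nontrivial A ∧ ∀ e : A, IsIdempotentElem e → e ∈ Set.center A → e = 0 ∨ e = 1

/-- `A` is a cyclic Nakayama algebra: connected Nakayama with no simple projective module. -/
def IsCyclicNakayama : Prop :=
  IsNakayama A ∧ IsConnectedAlgebra A ∧
    ¬ ∃ S : ModuleCat.{0} A, IsSimpleModule A ↥S ∧ Projective S

/-- `T ≅ top M` (and `top M` is simple): there is an essential epimorphism `M ⟶ T`. -/
def IsSimpleTopOf (M T : ModuleCat.{0} A) : Prop :=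
  IsSimpleModule A ↥T ∧
    ∃ f : M ⟶ T, Epi f ∧ ∀ (N : ModuleCat.{0} A) (g : N ⟶ M), Epi (g ≫ f) → Epi g

/-- `S ≅ soc M` (and `soc M` is simple): there is an essential monomorphism `S ⟶ M`. -/
def IsSimpleSocOf (M S : ModuleCat.{0} A) : Prop :=
  IsSimpleModule A ↥S ∧
    ∃ f : S ⟶ M, Mono f ∧ ∀ (N : ModuleCat.{0} A) (g : M ⟶ N), Mono (f ≫ g) → Mono g

/-- `0 ⟶ N ⟶ E ⟶ M ⟶ 0` is an almost split (Auslander-Reiten) sequence. -/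
def IsAlmostSplitSeq {N E M : ModuleCat.{0} A} (f : N ⟶ E) (g : E ⟶ M) : Prop :=
  Mono f ∧ Epi g ∧ (∃ w : f ≫ g = 0, (ShortComplex.mk f g w).Exact) ∧
  (¬ ∃ s : M ⟶ E, s ≫ g = 𝟙 M) ∧ Indec A N ∧ Indec A M ∧
  ∀ (X : ModuleCat.{0} A) (h : X ⟶ M), (¬ ∃ s : M ⟶ X, s ≫ h = 𝟙 M) → ∃ h' : X ⟶ E, h' ≫ g = h

/-- `N ≅ τ M`, the Auslander-Reiten translate of `M` : there is an almost split sequence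
`0 ⟶ N ⟶ E ⟶ M ⟶ 0`. -/
def IsTauOf (N M : ModuleCat.{0} A) : Prop :=
  ∃ (E : ModuleCat.{0} A) (f : N ⟶ E) (g : E ⟶ M), IsAlmostSplitSeq A f g

/-- `U ≅ ψ S = τ⁻ top (I S)`. -/
def IsPsiOf (S U : ModuleCat.{0} A) : Prop :=
  ∃ I, IsInjEnvOf A S I ∧ ∃ T, IsSimpleTopOf A I T ∧ IsTauOf A T U

/-- `T ≅ γ S = τ soc (P S)`. -/
def IsGammaOf (S T : ModuleCat.{0} A) : Prop :=
  ∃ P, IsProjCoverOf A S P ∧ ∃ U, IsSimpleSocOf A P U ∧ IsTauOf A T U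

/-- `T ≅ φ S = top (I S)`. -/
def IsPhiOf (S T : ModuleCat.{0} A) : Prop :=
  ∃ I, IsInjEnvOf A S I ∧ IsSimpleTopOf A I T

/-- There is a `ψ`-path `(S_1, …, S_m)` of cardinality `m` ending in `S`. -/
def PsiPathTo (m : ℕ) (S : ModuleCat.{0} A) : Prop :=
  1 ≤ m ∧ ∃ c : ℕ → ModuleCat.{0} A,
    (∀ i < m, IsSimpleModule A ↥(c i)) ∧
    (∀ i, i + 1 < m → IsPsiOf A (c i) (c (i + 1))) ∧
    Nonempty (c (m - 1) ≅ S)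

/-- `a(S)`: the supremum of the cardinalities of `ψ`-paths ending in `S`. -/
def aVal (S : ModuleCat.{0} A) : ℕ∞ :=
  sSup {d : ℕ∞ | ∃ m : ℕ, d = m ∧ PsiPathTo A m S}

/-- `a(A)`: the maximum of `a(S)` over the simple modules which are not `ψ`-cyclic. -/
def aAlg : ℕ∞ :=
  sSup {d : ℕ∞ | ∃ S : ModuleCat.{0} A, IsSimpleModule A ↥S ∧ aVal A S ≠ ⊤ ∧ aVal A S = d}

/-- `S` is a composition factor of `M`: a simple subquotient of `M`. -/
def IsCompFactorOf (S M : ModuleCat.{0} A) : Prop :=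
  IsSimpleModule A ↥S ∧ ∃ N' N : Submodule A ↥M, N' ≤ N ∧
    Nonempty ((↥N ⧸ N'.comap N.subtype) ≃ₗ[A] ↥S)

/-- `e(S) = min {pd S, pd (I S)} = x`. -/
def ERelVal (S : ModuleCat.{0} A) (x : ℕ∞) : Prop :=
  ∃ I, IsInjEnvOf A S I ∧ x = min (projDim A S) (projDim A I)

/-- `e*(S) = min {id S, id (P S)} = x`. -/
def EStarVal (S : ModuleCat.{0} A) (x : ℕ∞) : Prop :=
  ∃ P, IsProjCoverOf A S P ∧ x = min (injDim A S) (injDim A P)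

/-- `T = h(S) = top (Ω^{e(S)} N S)`, the homological permutation. -/
def HRel (S T : ModuleCat.{0} A) : Prop :=
  IsSimpleModule A ↥S ∧ IsSimpleModule A ↥T ∧
  ∃ z : ℕ, ERelVal A S z ∧
    ∃ N, ((Odd z ∧ N = S) ∨ (Even z ∧ IsInjEnvOf A S N)) ∧
      ∃ X, IsNthSyzygy A z N X ∧ IsSimpleTopOf A X T

/-- `S = h*(T) = soc (Σ^{e*(T)} N* T)`, the inverse homological permutation. -/
def HStarRel (T S : ModuleCat.{0} A) : Prop :=
  IsSimpleModule A ↥T ∧ IsSimpleModule A ↥S ∧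
  ∃ z : ℕ, EStarVal A T z ∧
    ∃ N, ((Odd z ∧ N = T) ∨ (Even z ∧ IsProjCoverOf A T N)) ∧
      ∃ X, IsNthCosyzygy A z N X ∧ IsSimpleSocOf A X S

/-- The `t`-fold relational iterate of a relation on modules (up to isomorphism). -/
def IterRel (r : ModuleCat.{0} A → ModuleCat.{0} A → Prop) :
    ℕ → ModuleCat.{0} A → ModuleCat.{0} A → Prop
  | 0, X, Y => Nonempty (X ≅ Y)
  | n + 1, X, Y => ∃ Z, r X Z ∧ IterRel r n Z Y

end ArtinAlg

/-!
The simple modules of a connected Nakayama algebra form a path or a cycle under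
`S ↦ top (rad (P S))`. On a path all simple modules have finite projective dimension. On a cycle,
unrolled to `ℤ`, an indecomposable module is an interval `[a, b)`, with top `a` and length `b - a`,
and if `[a, f a)` is the projective cover of the simple module `a`, then `f` is monotone and
`Ω [a, b) = [b, f a)`, so `Ω²` is `f` applied to both endpoints. Hence `[a, b)` has finite
projective dimension if and only if `f^m a = f^m b` or `f^m b = f^(m+1) a` for some `m`.

Both hypotheses provide `i` and `k` with `f^k (i + 1) = f^(k+1) i`: this is what `pd S = 2k` says
for `S = i`, and if an injective module `[i + 1, b)` has projective dimension `2k - 1`, then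
`f^k (i + 1) = f^k b`, while `f i < b` by injectivity. Then `f` is a successor map on its
stable range, so `f^m (j + 1)`, which lies between `f^m j` and `f^(m+1) j`, is one of the two.
-/

namespace NakayamaAlgebra

universe u

section Uniserial

variable {A M N S T : Type*} [Ring A] [AddCommGroup M] [Module A M] [AddCommGroup N] [Module A N]
  [AddCommGroup S] [Module A S] [AddCommGroup T] [Module A T]

/-- A module is uniserial if its submodules form a chain. This is `ArtinAlg.IsUniserial` for
unbundled modules in any universe. -/
class IsUniserialModule (A M : Type*) [Ring A] [AddCommGroup M] [Module A M] : Prop where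
  le_total : ∀ N₁ N₂ : Submodule A M, N₁ ≤ N₂ ∨ N₂ ≤ N₁

namespace IsUniserialModule

theorem of_injective [IsUniserialModule A M] (f : N →ₗ[A] M) (hf : Function.Injective f) :
    IsUniserialModule A N where
  le_total N₁ N₂ := by
    simpa only [Submodule.map_le_map_iff_of_injective hf] using
      le_total (N₁.map f) (N₂.map f)

theorem of_surjective [IsUniserialModule A M] (f : M →ₗ[A] N) (hf : Function.Surjective f) :
    IsUniserialModule A N where
  le_total N₁ N₂ := by
    simpa only [Submodule.comap_le_comap_iff_of_surjective hf] using
      le_total (N₁.comap f) (N₂.comap f)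

instance submodule [IsUniserialModule A M] (K : Submodule A M) : IsUniserialModule A K :=
  of_injective K.subtype K.subtype_injective

instance quotient [IsUniserialModule A M] (K : Submodule A M) : IsUniserialModule A (M ⧸ K) :=
  of_surjective K.mkQ K.mkQ_surjective

instance range [IsUniserialModule A M] (f : M →ₗ[A] N) : IsUniserialModule A (LinearMap.range f) :=
  of_surjective f.rangeRestrict f.surjective_rangeRestrict

instance of_isSimpleModule [IsSimpleModule A S] : IsUniserialModule A S where
  le_total N₁ _ := (eq_bot_or_eq_top N₁).imp (fun h ↦ h.trans_le bot_le)
    fun h ↦ le_top.trans h.ge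

theorem of_forall_fg (h : ∀ K : Submodule A M, K.FG → IsUniserialModule A K) :
    IsUniserialModule A M where
  le_total N₁ N₂ := by
    by_contra! hne
    obtain ⟨⟨x, hx₁, hx₂⟩, y, hy₂, hy₁⟩ := hne.imp SetLike.not_le_iff_exists.1
      SetLike.not_le_iff_exists.1
    let K := Submodule.span A {x, y}
    have := h K (Submodule.fg_span (Set.toFinite _))
    rcases le_total (N₁.comap K.subtype) (N₂.comap K.subtype) with hle | hle
    · exact hx₂ (@hle ⟨x, Submodule.subset_span (by simp)⟩ hx₁)
    · exact hy₁ (@hle ⟨y, Submodule.subset_span (by simp)⟩ hy₂)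

theorem eq_bot_or_eq_top_of_isCompl [IsUniserialModule A M] {N₁ N₂ : Submodule A M}
    (h : IsCompl N₁ N₂) : N₁ = ⊥ ∨ N₁ = ⊤ := by
  rcases le_total N₁ N₂ with hle | hle
  · exact .inl (h.disjoint.eq_bot_of_le hle)
  · exact .inr (h.codisjoint.eq_top_of_le hle)

theorem isNoetherian_of_isSemisimpleModule [IsUniserialModule A M] [IsSemisimpleModule A M] :
    IsNoetherian A M := by
  have bot_or_top (K : Submodule A M) : K = ⊥ ∨ K = ⊤ :=
    let ⟨_, hK⟩ := exists_isCompl K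
    eq_bot_or_eq_top_of_isCompl hK
  cases subsingleton_or_nontrivial M
  · infer_instance
  · have : IsSimpleModule A M := { eq_bot_or_eq_top := bot_or_top }
    infer_instance

theorem isNoetherian [IsSemiprimaryRing A] [IsUniserialModule A M] : IsNoetherian A M := by
  refine IsSemiprimaryRing.induction A A M
    (P := fun M ↦ IsUniserialModule A M → IsNoetherian A M)
    (fun M _ _ _ _ _ _ _ ↦ isNoetherian_of_isSemisimpleModule)
    (fun M _ _ _ _ hJ hM _ ↦ ?_) ‹_›
  exact (isNoetherian_iff_submodule_quotient _).2
    ⟨hJ inferInstance, hM inferInstance⟩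

theorem le_ker_of_ne_top [IsUniserialModule A M] [IsSimpleModule A S] {f : M →ₗ[A] S}
    (hf : Function.Surjective f) {K : Submodule A M} (hK : K ≠ ⊤) : K ≤ LinearMap.ker f :=
  (le_total K (LinearMap.ker f)).elim id fun h ↦
    (((LinearMap.isCoatom_ker_of_surjective hf).le_iff.1 h).resolve_left hK).le

theorem surjective_of_comp_ne_zero [IsUniserialModule A M] [IsSimpleModule A S]
    {f : M →ₗ[A] S} {g : N →ₗ[A] M} (h : f ∘ₗ g ≠ 0) : Function.Surjective g := by
  have hf : Function.Surjective f :=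
    f.surjective_of_ne_zero fun hf ↦ h (by rw [hf, LinearMap.zero_comp])
  rw [← LinearMap.range_eq_top]
  by_contra hg
  exact h (LinearMap.range_le_ker_iff.1 (le_ker_of_ne_top hf hg))

theorem nonempty_linearEquiv_of_surjective [IsUniserialModule A M] [IsSimpleModule A S]
    [IsSimpleModule A T] {f : M →ₗ[A] S} (hf : Function.Surjective f)
    {g : M →ₗ[A] T} (hg : Function.Surjective g) : Nonempty (S ≃ₗ[A] T) := by
  have hker : LinearMap.ker f = LinearMap.ker g :=
    le_antisymm (le_ker_of_ne_top hg (LinearMap.isCoatom_ker_of_surjective hf).1)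
      (le_ker_of_ne_top hf (LinearMap.isCoatom_ker_of_surjective hg).1)
  exact ⟨(f.quotKerEquivOfSurjective hf).symm ≪≫ₗ Submodule.quotEquivOfEq _ _ hker ≪≫ₗ
    g.quotKerEquivOfSurjective hg⟩

theorem injective_of_surjective [IsUniserialModule A M] [Module.Projective A N] [Nontrivial N]
    {f : M →ₗ[A] N} (hf : Function.Surjective f) : Function.Injective f := by
  obtain ⟨s, hs⟩ := Module.projective_lifting_property f LinearMap.id hf
  have hfs : Function.LeftInverse f s := LinearMap.congr_fun hs
  rcases le_total (LinearMap.ker f) (LinearMap.range s) with hle | hle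
  · refine (injective_iff_map_eq_zero f).2 fun x hx ↦ ?_
    obtain ⟨y, rfl⟩ := hle hx
    rw [← hfs y, hx, map_zero]
  · obtain ⟨y, hy⟩ := exists_ne (0 : N)
    exact absurd ((hfs y).symm.trans (hle (LinearMap.mem_range_self s y))) hy

theorem not_surjective_of_ne_top {M I : Type u} [AddCommGroup M] [Module A M]
    [AddCommGroup I] [Module A I] [Nontrivial I] [Module.Injective A I] [IsUniserialModule A M]
    {K : Submodule A M} (hK : K ≠ ⊤) (g : K →ₗ[A] I) : ¬ Function.Surjective g := by
  intro hg
  obtain ⟨h, hh⟩ := Module.Injective.out K.subtype K.subtype_injective g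
  rcases le_total K (LinearMap.ker h) with hle | hle
  · obtain ⟨y, hy⟩ := exists_ne (0 : I)
    obtain ⟨x, rfl⟩ := hg y
    exact hy (hh x ▸ hle x.2)
  · refine hK (Submodule.eq_top_iff'.2 fun m ↦ ?_)
    obtain ⟨x, hx⟩ := hg (h m)
    have hsub : m - x ∈ K := hle (LinearMap.sub_mem_ker_iff.2 ((hh x).trans hx).symm)
    simpa only [sub_add_cancel] using K.add_mem hsub x.2

end IsUniserialModule

end Uniserial

section Length

variable {A M N : Type*} [Ring A] [AddCommGroup M] [Module A M] [AddCommGroup N] [Module A N]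

/-- The length of a module as a natural number; the junk value `0` stands for infinite length. -/
def natLength (A M : Type*) [Ring A] [AddCommGroup M] [Module A M] : ℕ :=
  (Module.length A M).toNat

theorem natLength_congr (e : M ≃ₗ[A] N) : natLength A M = natLength A N := by
  rw [natLength, natLength, e.length_eq]

theorem natLength_of_isSimpleModule [IsSimpleModule A M] : natLength A M = 1 := by
  rw [natLength, Module.length_eq_one, ENat.toNat_one]

variable [IsNoetherian A M] [IsArtinian A M]

theorem coe_natLength : (natLength A M : ℕ∞) = Module.length A M :=
  ENat.natCast_toNat Module.length_ne_top

theorem natLength_eq_zero_iff : natLength A M = 0 ↔ Subsingleton M := by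
  rw [← Module.length_eq_zero_iff (R := A), ← coe_natLength, Nat.cast_eq_zero]

theorem natLength_eq_add_quotient (K : Submodule A M) :
    natLength A M = natLength A K + natLength A (M ⧸ K) := by
  have h := Module.length_eq_add_of_exact K.subtype K.mkQ K.subtype_injective K.mkQ_surjective
    (LinearMap.exact_subtype_mkQ K)
  simp only [← coe_natLength] at h
  exact_mod_cast h

theorem natLength_eq_ker_add {f : M →ₗ[A] N} (hf : Function.Surjective f) :
    natLength A M = natLength A (LinearMap.ker f) + natLength A N := by
  rw [natLength_eq_add_quotient (LinearMap.ker f), natLength_congr (f.quotKerEquivOfSurjective hf)]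

theorem natLength_lt_of_ne_top {K : Submodule A M} (hK : K ≠ ⊤) :
    natLength A K < natLength A M := by
  have : Nontrivial (M ⧸ K) := Submodule.Quotient.nontrivial_iff.2 hK
  have : natLength A (M ⧸ K) ≠ 0 := natLength_eq_zero_iff.not.2 (not_subsingleton _)
  have := natLength_eq_add_quotient K
  omega

theorem IsUniserialModule.le_of_natLength_le [IsUniserialModule A M] {K L : Submodule A M}
    (h : natLength A K ≤ natLength A L) : K ≤ L := by
  refine (le_total K L).elim id fun hLK ↦ ?_
  rw [← natLength_congr (Submodule.comapSubtypeEquivOfLe hLK)] at h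
  by_contra hKL
  exact h.not_gt (natLength_lt_of_ne_top (mt Submodule.comap_subtype_eq_top.1 hKL))

end Length

section SimpleQuotient

variable {A M S : Type*} [Ring A] [AddCommGroup M] [Module A M] [AddCommGroup S] [Module A S]

theorem exists_surjective_isSimpleModule {A : Type*} {M : Type u} [Ring A] [AddCommGroup M]
    [Module A M] [Module.Finite A M] [Nontrivial M] :
    ∃ (S : ModuleCat.{u} A) (f : M →ₗ[A] S), IsSimpleModule A S ∧ Function.Surjective f :=
  let ⟨K, hK⟩ := IsCoatomic.exists_coatom (Submodule A M)
  ⟨ModuleCat.of A (M ⧸ K), K.mkQ, isSimpleModule_iff_isCoatom.2 hK, K.mkQ_surjective⟩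

theorem surjective_comp_subtype_or_of_codisjoint [IsSimpleModule A S] {f : M →ₗ[A] S}
    (hf : Function.Surjective f) {N₁ N₂ : Submodule A M} (h : Codisjoint N₁ N₂) :
    Function.Surjective (f ∘ₗ N₁.subtype) ∨ Function.Surjective (f ∘ₗ N₂.subtype) := by
  have surjective_of_not_le {N : Submodule A M} (hN : ¬ N ≤ LinearMap.ker f) :
      Function.Surjective (f ∘ₗ N.subtype) :=
    LinearMap.surjective_of_ne_zero fun h0 ↦ hN (N.range_subtype ▸ LinearMap.range_le_ker_iff.2 h0)
  by_contra! hne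
  exact (LinearMap.isCoatom_ker_of_surjective hf).1 <| top_le_iff.1 <|
    h (not_imp_comm.1 surjective_of_not_le hne.1) (not_imp_comm.1 surjective_of_not_le hne.2)

end SimpleQuotient

section Nakayama

open ArtinAlg (IsNakayama)

variable {A : Type} [Ring A] {M S : Type} [AddCommGroup M] [Module A M]
  [AddCommGroup S] [Module A S]

theorem isUniserialModule_of_forall_isCompl (hNak : IsNakayama A) [Module.Finite A M]
    (h : ∀ N₁ N₂ : Submodule A M, IsCompl N₁ N₂ → N₁ = ⊥ ∨ N₂ = ⊥) : IsUniserialModule A M where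
  le_total N₁ N₂ := by
    cases subsingleton_or_nontrivial M
    · exact .inl (Subsingleton.elim N₁ N₂).le
    · exact hNak (ModuleCat.of A M) ‹_› ⟨‹_›, h⟩ N₁ N₂

/-- Distinct summands of a finitely generated submodule cannot both contain `W`. -/
theorem isUniserialModule_of_forall_le (hNak : IsNakayama A) {W : Submodule A M} (hW : W ≠ ⊥)
    (h : ∀ N : Submodule A M, N ≠ ⊥ → W ≤ N) : IsUniserialModule A M := by
  refine .of_forall_fg fun K hK ↦ ?_
  have : Module.Finite A K := Module.Finite.iff_fg.2 hK
  refine isUniserialModule_of_forall_isCompl hNak fun N₁ N₂ hc ↦ ?_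
  by_contra! hne
  have le_map {N : Submodule A K} (hN : N ≠ ⊥) : W ≤ N.map K.subtype :=
    h _ fun h0 ↦ hN <| Submodule.map_injective_of_injective K.subtype_injective
      (h0.trans (Submodule.map_bot _).symm)
  refine hW (le_bot_iff.1 ((le_inf (le_map hne.1) (le_map hne.2)).trans_eq ?_))
  rw [← Submodule.map_inf _ K.subtype_injective, hc.inf_eq_bot, Submodule.map_bot]

/-- The length of the projective cover of `S`, realised as the least length of a finitely generated
projective module mapping onto `S`. -/
def coverLength (A : Type) [Ring A] (S : Type) [AddCommGroup S] [Module A S] : ℕ :=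
  sInf {n | ∃ (P : ModuleCat.{0} A) (p : P →ₗ[A] S), Module.Finite A P ∧ Module.Projective A P ∧
    Function.Surjective p ∧ natLength A P = n}

theorem exists_uniserial_cover [IsArtinianRing A] (hNak : IsNakayama A) [IsSimpleModule A S] :
    ∃ (P : ModuleCat.{0} A) (p : P →ₗ[A] S), Module.Finite A P ∧ Module.Projective A P ∧
      IsUniserialModule A P ∧ Function.Surjective p ∧ natLength A P = coverLength A S := by
  have : Nontrivial S := IsSimpleModule.nontrivial A S
  obtain ⟨s, hs⟩ := exists_ne (0 : S)
  obtain ⟨P, p, hfin, hproj, hp, hlen⟩ := Nat.sInf_mem (s := {n | ∃ (P : ModuleCat.{0} A)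
    (p : P →ₗ[A] S), Module.Finite A P ∧ Module.Projective A P ∧ Function.Surjective p ∧
      natLength A P = n}) ⟨_, ModuleCat.of A A, LinearMap.toSpanSingleton A S s,
        inferInstanceAs (Module.Finite A A), inferInstanceAs (Module.Projective A A),
        IsSimpleModule.toSpanSingleton_surjective A hs, rfl⟩
  have eq_bot_of_surjective {N₁ N₂ : Submodule A P} (hc : IsCompl N₁ N₂)
      (h : Function.Surjective (p ∘ₗ N₁.subtype)) : N₂ = ⊥ := by
    have hproj₁ : Module.Projective A N₁ :=
      .of_split N₁.subtype (N₁.projectionOnto N₂ hc) (by ext x; simp)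
    suffices h₁ : N₁ = ⊤ from eq_bot_of_top_isCompl (h₁ ▸ hc)
    by_contra hne
    exact (natLength_lt_of_ne_top hne).not_ge <| hlen ▸ Nat.sInf_le
      ⟨ModuleCat.of A N₁, p ∘ₗ N₁.subtype, inferInstanceAs (Module.Finite A N₁), hproj₁, h, rfl⟩
  refine ⟨P, p, hfin, hproj, isUniserialModule_of_forall_isCompl hNak fun N₁ N₂ hc ↦ ?_, hp, hlen⟩
  exact (surjective_comp_subtype_or_of_codisjoint hp hc.codisjoint).symm.imp
    (eq_bot_of_surjective hc.symm) (eq_bot_of_surjective hc)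

end Nakayama

section Arrow

open ArtinAlg (IsNakayama)

variable {A : Type} [Ring A] {M S S' T T' : Type} [AddCommGroup M] [Module A M]
  [AddCommGroup S] [Module A S] [AddCommGroup S'] [Module A S']
  [AddCommGroup T] [Module A T] [AddCommGroup T'] [Module A T']

/-- An arrow `S → T` of the Ext-quiver of a Nakayama algebra: a finitely generated uniserial module
with top `S` whose radical has top `T`. -/
def HasArrow (A : Type) [Ring A] (S T : Type) [AddCommGroup S] [Module A S]
    [AddCommGroup T] [Module A T] : Prop :=
  ∃ (M : ModuleCat.{0} A) (f : M →ₗ[A] S) (g : LinearMap.ker f →ₗ[A] T), Module.Finite A M ∧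
    IsUniserialModule A M ∧ Function.Surjective f ∧ Function.Surjective g

namespace HasArrow

theorem congr (h : HasArrow A S T) (e : S ≃ₗ[A] S') (e' : T ≃ₗ[A] T') : HasArrow A S' T' := by
  obtain ⟨M, f, g, hfin, huni, hf, hg⟩ := h
  refine ⟨M, e ∘ₗ f, e' ∘ₗ g ∘ₗ (LinearEquiv.ofEq _ _ (e.ker_comp f)).toLinearMap, hfin, huni,
    e.surjective.comp hf, e'.surjective.comp (hg.comp (LinearEquiv.surjective _))⟩

theorem exists_surjective_ker [IsSimpleModule A S] (h : HasArrow A S T) {P : Type}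
    [AddCommGroup P] [Module A P] [Module.Projective A P] {p : P →ₗ[A] S}
    (hp : Function.Surjective p) : ∃ g : LinearMap.ker p →ₗ[A] T, Function.Surjective g := by
  obtain ⟨M, f, g, -, _, hf, hg⟩ := h
  obtain ⟨q, rfl⟩ := Module.projective_lifting_property f p hf
  have hq : Function.Surjective q :=
    IsUniserialModule.surjective_of_comp_ne_zero fun h0 ↦ by
      have := IsSimpleModule.nontrivial A S
      obtain ⟨s, hs⟩ := exists_ne (0 : S)
      obtain ⟨x, rfl⟩ := hp s
      exact hs (LinearMap.congr_fun h0 x)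
  refine ⟨g ∘ₗ q.restrict fun _ hx ↦ hx, hg.comp fun y ↦ ?_⟩
  obtain ⟨x, hx⟩ := hq y
  exact ⟨⟨x, (congrArg f hx).trans y.2⟩, Subtype.ext hx⟩

theorem target_unique [IsArtinianRing A] (hNak : IsNakayama A) [IsSimpleModule A S]
    [IsSimpleModule A T] [IsSimpleModule A T'] (h : HasArrow A S T) (h' : HasArrow A S T') :
    Nonempty (T ≃ₗ[A] T') := by
  obtain ⟨P, p, _, _, _, hp, -⟩ := exists_uniserial_cover (A := A) (S := S) hNak
  obtain ⟨g, hg⟩ := h.exists_surjective_ker hp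
  obtain ⟨g', hg'⟩ := h'.exists_surjective_ker hp
  exact IsUniserialModule.nonempty_linearEquiv_of_surjective hg hg'

end HasArrow

theorem IsUniserialModule.le_total_of_le {K : Submodule A M} [IsUniserialModule A K]
    {X Y : Submodule A M} (hX : X ≤ K) (hY : Y ≤ K) : X ≤ Y ∨ Y ≤ X := by
  simpa only [Submodule.comap_subtype_le_iff, inf_eq_right.2 hX, inf_eq_right.2 hY] using
    le_total (X.comap K.subtype) (Y.comap K.subtype)

theorem nonempty_quotient_linearEquiv_of_isCoatom (hNak : IsNakayama A) [Module.Finite A M]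
    {B B' : Submodule A M} [IsUniserialModule A B] [IsUniserialModule A B']
    (hB : IsCoatom B) (hB' : IsCoatom B') (hne : B ⊓ B' ≠ ⊥) :
    Nonempty ((M ⧸ B) ≃ₗ[A] (M ⧸ B')) := by
  have isCompl_of_disjoint {N C : Submodule A M} [IsUniserialModule A C] (hC : IsCoatom C)
      (hle : B ⊓ B' ≤ C) (hN : N ≠ ⊥) (hdisj : N ⊓ (B ⊓ B') = ⊥) : IsCompl C N := by
    have hCN : C ⊓ N = ⊥ := by
      rcases IsUniserialModule.le_total_of_le (inf_le_left (b := N)) hle with h | h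
      · exact le_bot_iff.1 (hdisj ▸ le_inf inf_le_right h)
      · exact absurd (le_bot_iff.1 (hdisj ▸ le_inf (h.trans inf_le_right) le_rfl)) hne
    refine ⟨disjoint_iff.2 hCN, codisjoint_iff.2 (hC.2 _ (left_lt_sup.2 fun hNC ↦ hN ?_))⟩
    rw [← hCN, inf_eq_right.2 hNC]
  have equiv_of_disjoint {N : Submodule A M} (hN : N ≠ ⊥) (hdisj : N ⊓ (B ⊓ B') = ⊥) :
      Nonempty ((M ⧸ B) ≃ₗ[A] (M ⧸ B')) :=
    ⟨Submodule.quotientEquivOfIsCompl B N (isCompl_of_disjoint hB inf_le_left hN hdisj) ≪≫ₗ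
      (Submodule.quotientEquivOfIsCompl B' N
        (isCompl_of_disjoint hB' inf_le_right hN hdisj)).symm⟩
  by_cases h : ∀ N₁ N₂ : Submodule A M, IsCompl N₁ N₂ → N₁ = ⊥ ∨ N₂ = ⊥
  · have := isUniserialModule_of_forall_isCompl hNak h
    refine ⟨Submodule.quotEquivOfEq _ _ ?_⟩
    rcases IsUniserialModule.le_total B B' with hle | hle
    · exact ((hB.le_iff.1 hle).resolve_left hB'.1).symm
    · exact (hB'.le_iff.1 hle).resolve_left hB.1
  · push Not at h
    obtain ⟨N₁, N₂, hc, h₁, h₂⟩ := h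
    rcases IsUniserialModule.le_total_of_le (K := B) (X := N₁ ⊓ (B ⊓ B')) (Y := N₂ ⊓ (B ⊓ B'))
      (inf_le_right.trans inf_le_left) (inf_le_right.trans inf_le_left) with hle | hle
    · exact equiv_of_disjoint h₁ <| le_bot_iff.1 <|
        hc.inf_eq_bot ▸ le_inf inf_le_left (hle.trans inf_le_left)
    · exact equiv_of_disjoint h₂ <| le_bot_iff.1 <|
        hc.inf_eq_bot ▸ le_inf (hle.trans inf_le_left) inf_le_left

section Amalgam

variable {M' : Type} [AddCommGroup M'] [Module A M'] {K : Submodule A M} {K' : Submodule A M'}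

/-- The relations defining the amalgam of `M` and `M'` along maps `g : K → T` and `g' : K' → T`
from submodules: the pairs `(x, y) ∈ K × K'` with `g x + g' y = 0`. -/
def amalgamRelations (g : K →ₗ[A] T) (g' : K' →ₗ[A] T) : Submodule A (M × M') :=
  (LinearMap.ker (g.coprod g')).map (K.subtype.prodMap K'.subtype)

variable {g : K →ₗ[A] T} {g' : K' →ₗ[A] T}

theorem mem_amalgamRelations {z : M × M'} :
    z ∈ amalgamRelations g g' ↔ ∃ (x : K) (y : K'), g x + g' y = 0 ∧ (↑x, ↑y) = z := by
  simp [amalgamRelations]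

theorem amalgamRelations_sup_range_inr (hg' : Function.Surjective g') :
    amalgamRelations g g' ⊔ LinearMap.range (LinearMap.inr A M M') =
      K.comap (LinearMap.fst A M M') := by
  refine le_antisymm (sup_le ?_ ?_) ?_
  · intro z hz
    obtain ⟨x, y, -, rfl⟩ := mem_amalgamRelations.1 hz
    exact x.2
  · rintro _ ⟨y, rfl⟩
    exact K.zero_mem
  · rintro ⟨x, y⟩ hx
    obtain ⟨y', hy'⟩ := hg' (-g ⟨x, hx⟩)
    exact Submodule.mem_sup.2 ⟨(x, y'), mem_amalgamRelations.2 ⟨⟨x, hx⟩, y', by simp [hy'], rfl⟩,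
      (0, y - y'), ⟨y - y', rfl⟩, by simp⟩

theorem amalgamRelations_sup_range_inl (hg : Function.Surjective g) :
    amalgamRelations g g' ⊔ LinearMap.range (LinearMap.inl A M M') =
      K'.comap (LinearMap.snd A M M') := by
  refine le_antisymm (sup_le ?_ ?_) ?_
  · intro z hz
    obtain ⟨x, y, -, rfl⟩ := mem_amalgamRelations.1 hz
    exact y.2
  · rintro _ ⟨x, rfl⟩
    exact K'.zero_mem
  · rintro ⟨x, y⟩ hy
    obtain ⟨x', hx'⟩ := hg (-g' ⟨y, hy⟩)
    exact Submodule.mem_sup.2 ⟨(x', y), mem_amalgamRelations.2 ⟨x', ⟨y, hy⟩, by simp [hx'], rfl⟩,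
      (x - x', 0), ⟨x - x', rfl⟩, by simp⟩

theorem range_inl_inf_range_inr_ne_bot [Nontrivial T] (hg : Function.Surjective g)
    (hg' : Function.Surjective g') :
    LinearMap.range ((amalgamRelations g g').mkQ ∘ₗ LinearMap.inl A M M') ⊓
      LinearMap.range ((amalgamRelations g g').mkQ ∘ₗ LinearMap.inr A M M') ≠ ⊥ := by
  obtain ⟨t, ht⟩ := exists_ne (0 : T)
  obtain ⟨x, rfl⟩ := hg t
  obtain ⟨y, hy⟩ := hg' (g x)
  have hxy : (amalgamRelations g g').mkQ (0, ↑y) = (amalgamRelations g g').mkQ (↑x, 0) :=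
    (Submodule.Quotient.eq _).2 <| mem_amalgamRelations.2 ⟨-x, y, by simp [hy], by simp⟩
  refine (Submodule.ne_bot_iff _).2 ⟨_, ⟨⟨x, rfl⟩, ⟨y, hxy⟩⟩, fun h0 ↦ ht ?_⟩
  obtain ⟨x', y', hxy', heq⟩ := mem_amalgamRelations.1 ((Submodule.Quotient.mk_eq_zero _).1 h0)
  obtain rfl : x' = x := Subtype.ext (congrArg Prod.fst heq)
  obtain rfl : y' = 0 := Subtype.ext (congrArg Prod.snd heq)
  rwa [map_zero, add_zero] at hxy'

end Amalgam

/-- In the amalgam of the two modules over `T`, the images of both are uniserial maximal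
submodules. -/
theorem HasArrow.source_unique (hNak : IsNakayama A) [IsSimpleModule A S] [IsSimpleModule A S']
    [IsSimpleModule A T] (h : HasArrow A S T) (h' : HasArrow A S' T) :
    Nonempty (S ≃ₗ[A] S') := by
  obtain ⟨M, f, g, _, _, hf, hg⟩ := h
  obtain ⟨M', f', g', _, _, hf', hg'⟩ := h'
  have := IsSimpleModule.nontrivial A T
  let D := amalgamRelations g g'
  let B := LinearMap.range (D.mkQ ∘ₗ LinearMap.inl A M M')
  let B' := LinearMap.range (D.mkQ ∘ₗ LinearMap.inr A M M')
  let e : (((M × M') ⧸ D) ⧸ B') ≃ₗ[A] S :=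
    Submodule.quotEquivOfEq _ _ (LinearMap.range_comp _ _) ≪≫ₗ
      Submodule.quotientQuotientEquivQuotientSup D _ ≪≫ₗ
      Submodule.quotEquivOfEq _ _ (amalgamRelations_sup_range_inr hg') ≪≫ₗ
      (f ∘ₗ LinearMap.fst A M M').quotKerEquivOfSurjective (hf.comp Prod.fst_surjective)
  let e' : (((M × M') ⧸ D) ⧸ B) ≃ₗ[A] S' :=
    Submodule.quotEquivOfEq _ _ (LinearMap.range_comp _ _) ≪≫ₗ
      Submodule.quotientQuotientEquivQuotientSup D _ ≪≫ₗ
      Submodule.quotEquivOfEq _ _ (amalgamRelations_sup_range_inl hg) ≪≫ₗ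
      (f' ∘ₗ LinearMap.snd A M M').quotKerEquivOfSurjective (hf'.comp Prod.snd_surjective)
  obtain ⟨u⟩ := nonempty_quotient_linearEquiv_of_isCoatom hNak (B := B) (B' := B')
    (isSimpleModule_iff_isCoatom.1 (IsSimpleModule.congr e'))
    (isSimpleModule_iff_isCoatom.1 (IsSimpleModule.congr e))
    (range_inl_inf_range_inr_ne_bot hg hg')
  exact ⟨e.symm ≪≫ₗ u.symm ≪≫ₗ e'⟩

end Arrow

section Support

variable {A : Type*} [Ring A] {L M N S : Type*} [AddCommGroup L] [Module A L]
  [AddCommGroup M] [Module A M] [AddCommGroup N] [Module A N] [AddCommGroup S] [Module A S]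

theorem exists_comp_eq_of_ker_le {q : M →ₗ[A] N} (hq : Function.Surjective q)
    {f : M →ₗ[A] L} (h : LinearMap.ker q ≤ LinearMap.ker f) : ∃ u : N →ₗ[A] L, u ∘ₗ q = f := by
  refine ⟨(LinearMap.ker q).liftQ f h ∘ₗ (q.quotKerEquivOfSurjective hq).symm.toLinearMap, ?_⟩
  ext x
  rw [LinearMap.comp_apply, LinearMap.comp_apply, LinearEquiv.coe_coe,
    ← LinearMap.quotKerEquivOfSurjective_apply_mk q hq x, LinearEquiv.symm_apply_apply,
    Submodule.liftQ_apply]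

/-- All simple subquotients of `M` satisfy `C`. -/
def SupportedOn (C : ModuleCat.{u} A → Prop) (M : Type*) [AddCommGroup M] [Module A M] : Prop :=
  ∀ (N : Submodule A M) (S : ModuleCat.{u} A) (g : N →ₗ[A] S), IsSimpleModule A S →
    Function.Surjective g → C S

namespace SupportedOn

variable {C : ModuleCat.{u} A → Prop}

theorem of_injective (h : SupportedOn C M) (i : N →ₗ[A] M) (hi : Function.Injective i) :
    SupportedOn C N := fun K S g hS hg ↦
  h (K.map i) S (g ∘ₗ (Submodule.equivMapOfInjective i hi K).symm) hS
    (hg.comp (LinearEquiv.surjective _))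

theorem of_surjective (h : SupportedOn C M) (q : M →ₗ[A] N) (hq : Function.Surjective q) :
    SupportedOn C N := fun K S g hS hg ↦
  h (K.comap q) S (g ∘ₗ q.restrict fun _ hx ↦ hx) hS <| hg.comp fun y ↦
    let ⟨x, hx⟩ := hq y
    ⟨⟨x, by simp [hx]⟩, Subtype.ext hx⟩

theorem of_exact (hL : SupportedOn C L) (hN : SupportedOn C N) {i : L →ₗ[A] M} {q : M →ₗ[A] N}
    (h : Function.Exact i q) : SupportedOn C M := by
  intro K S g hS hg
  by_cases hker : LinearMap.ker (q ∘ₗ K.subtype) ≤ LinearMap.ker g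
  · obtain ⟨u, rfl⟩ := exists_comp_eq_of_ker_le (f := g)
      (q := (q ∘ₗ K.subtype).rangeRestrict) (LinearMap.surjective_rangeRestrict _)
      (by rwa [LinearMap.ker_rangeRestrict])
    exact hN _ S u hS (Function.Surjective.of_comp (g := (q ∘ₗ K.subtype).rangeRestrict) hg)
  · obtain ⟨⟨_, hxK⟩, hx, hgx⟩ := SetLike.not_le_iff_exists.1 hker
    obtain ⟨x, rfl⟩ := (h _).1 hx
    exact hL (K.comap i) S (g ∘ₗ i.restrict fun _ hx ↦ hx) hS <|
      LinearMap.surjective_of_ne_zero fun h0 ↦ hgx (LinearMap.congr_fun h0 ⟨x, hxK⟩)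

theorem sup {X Y : Submodule A M} (hX : SupportedOn C X) (hY : SupportedOn C Y) :
    SupportedOn C ↥(X ⊔ Y) := by
  have hXY : SupportedOn C (X × Y) :=
    hX.of_exact hY (Function.Exact.inl_snd (R := A))
  refine (hXY.of_surjective (X.subtype.coprod Y.subtype).rangeRestrict
    (LinearMap.surjective_rangeRestrict _)).of_injective
    (LinearEquiv.ofEq _ _ (by simp [LinearMap.range_coprod])).toLinearMap (LinearEquiv.injective _)

theorem map {K : Submodule A M} {X : Submodule A K} (h : SupportedOn C X) :
    SupportedOn C (X.map K.subtype) :=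
  h.of_surjective (K.subtype.submoduleMap X) (K.subtype.submoduleMap_surjective X)

theorem of_subsingleton [Subsingleton M] : SupportedOn C M := fun _ S _ _ hg ↦
  have := IsSimpleModule.nontrivial A S
  absurd hg.subsingleton (not_subsingleton S)

theorem prop_of_surjective (h : SupportedOn C M) {S : ModuleCat.{u} A} [hS : IsSimpleModule A S]
    (f : M →ₗ[A] S) (hf : Function.Surjective f) : C S :=
  h ⊤ S (f ∘ₗ Submodule.topEquiv.toLinearMap) hS (hf.comp (LinearEquiv.surjective _))

theorem linearMap_eq_zero {M : Type u} [AddCommGroup M] [Module A M] [Module.Finite A M]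
    (hM : SupportedOn C M) {N : Type u} [AddCommGroup N] [Module A N]
    (hN : SupportedOn (fun S ↦ ¬ C S) N) (f : M →ₗ[A] N) : f = 0 := by
  rw [← LinearMap.range_eq_bot, ← Submodule.subsingleton_iff_eq_bot]
  by_contra hne
  rw [not_subsingleton_iff_nontrivial] at hne
  obtain ⟨S, g, hS, hg⟩ := exists_surjective_isSimpleModule (A := A) (M := LinearMap.range f)
  exact (hN _ S g hS hg) <| (hM.of_surjective _ f.surjective_rangeRestrict).prop_of_surjective g hg

end SupportedOn

end Support

theorem exists_isIdempotentElem_mem_center {A : Type*} [Ring A] {X Y : Submodule A A}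
    (h : Codisjoint X Y) (hXY : ∀ x ∈ X, ∀ y ∈ Y, x * y = 0) (hYX : ∀ x ∈ X, ∀ y ∈ Y, y * x = 0) :
    ∃ e ∈ X, 1 - e ∈ Y ∧ IsIdempotentElem e ∧ e ∈ Set.center A := by
  obtain ⟨x, hx, y, hy, hxy⟩ := Submodule.mem_sup.1 (h.eq_top ▸ Submodule.mem_top : (1 : A) ∈ X ⊔ Y)
  obtain rfl : y = 1 - x := eq_sub_of_add_eq' hxy
  refine ⟨x, hx, hy, (IsIdempotentElem.of_mul_add (hXY x hx _ hy) hxy).1,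
    Semigroup.mem_center_iff.2 fun a ↦ ?_⟩
  have hax : a * x = x * (a * x) := by
    simpa [sub_mul, sub_eq_zero] using hYX _ (X.smul_mem a hx) _ hy
  have hxa : x * a = x * (a * x) := by
    simpa [mul_sub, sub_eq_zero] using hXY _ hx _ (Y.smul_mem a hy)
  exact hax.trans hxa.symm

section Connected

open ArtinAlg (IsNakayama IsConnectedAlgebra)

variable {A : Type} [Ring A] {C : ModuleCat.{0} A → Prop}

/-- A class of simple modules which is a union of connected components of the Ext-quiver. -/
structure IsArrowClosed (C : ModuleCat.{0} A → Prop) : Prop where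
  iff_of_linearEquiv {S T : ModuleCat.{0} A} : (S ≃ₗ[A] T) → (C S ↔ C T)
  iff_of_hasArrow {S T : ModuleCat.{0} A} : IsSimpleModule A S → IsSimpleModule A T →
    HasArrow A S T → (C S ↔ C T)

theorem IsArrowClosed.not (hC : IsArrowClosed C) : IsArrowClosed fun S ↦ ¬ C S where
  iff_of_linearEquiv e := (hC.iff_of_linearEquiv e).not
  iff_of_hasArrow hS hT h := (hC.iff_of_hasArrow hS hT h).not

variable [IsArtinianRing A]

theorem IsArrowClosed.supportedOn_of_surjective (hC : IsArrowClosed C) {M : Type}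
    [AddCommGroup M] [Module A M] [Module.Finite A M] [IsUniserialModule A M]
    {S : ModuleCat.{0} A} [hS : IsSimpleModule A S] {f : M →ₗ[A] S} (hf : Function.Surjective f)
    (hCS : C S) : SupportedOn C M := by
  induction hn : natLength A M using Nat.strong_induction_on generalizing M S with
  | _ n ih =>
  intro N T g hT hg
  by_cases hN : N = ⊤
  · subst hN
    obtain ⟨e⟩ := IsUniserialModule.nonempty_linearEquiv_of_surjective hf
      (g := g ∘ₗ Submodule.topEquiv.symm.toLinearMap) (hg.comp (LinearEquiv.surjective _))
    exact (hC.iff_of_linearEquiv e).1 hCS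
  · have hle := IsUniserialModule.le_ker_of_ne_top hf hN
    have := IsSimpleModule.nontrivial A T
    have := hg.nontrivial
    have := (Submodule.inclusion_injective hle).nontrivial
    obtain ⟨U, u, hU, hu⟩ := exists_surjective_isSimpleModule (A := A) (M := LinearMap.ker f)
    have hCU : C U := (hC.iff_of_hasArrow hS hU
      ⟨ModuleCat.of A M, f, u, ‹_›, ‹_›, hf, hu⟩).1 hCS
    have hlt := natLength_lt_of_ne_top (LinearMap.isCoatom_ker_of_surjective hf).1
    exact (ih _ (hn ▸ hlt) hu hCU rfl).of_injective _ (Submodule.inclusion_injective hle)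
      |>.prop_of_surjective g hg

theorem IsArrowClosed.exists_sup_eq_top (hNak : IsNakayama A) (hC : IsArrowClosed C)
    (M : Type) [AddCommGroup M] [Module A M] [Module.Finite A M] :
    ∃ X Y : Submodule A M, X ⊔ Y = ⊤ ∧ SupportedOn C X ∧ SupportedOn (fun S ↦ ¬ C S) Y := by
  induction hn : natLength A M using Nat.strong_induction_on generalizing M with
  | _ n ih =>
  by_cases hi : ∀ N₁ N₂ : Submodule A M, IsCompl N₁ N₂ → N₁ = ⊥ ∨ N₂ = ⊥
  · have := isUniserialModule_of_forall_isCompl hNak hi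
    cases subsingleton_or_nontrivial M
    · exact ⟨⊤, ⊤, sup_top_eq _, .of_subsingleton, .of_subsingleton⟩
    · obtain ⟨S, f, hS, hf⟩ := exists_surjective_isSimpleModule (A := A) (M := M)
      by_cases hCS : C S
      · exact ⟨⊤, ⊥, sup_bot_eq _, (hC.supportedOn_of_surjective hf hCS).of_injective _
          (Submodule.subtype_injective _), .of_subsingleton⟩
      · exact ⟨⊥, ⊤, bot_sup_eq _, .of_subsingleton,
          (hC.not.supportedOn_of_surjective hf hCS).of_injective _
            (Submodule.subtype_injective _)⟩
  · push Not at hi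
    obtain ⟨N₁, N₂, hc, h₁, h₂⟩ := hi
    have hlt₁ : natLength A N₁ < n := hn ▸ natLength_lt_of_ne_top fun h ↦
      h₂ (eq_bot_of_top_isCompl (h ▸ hc))
    have hlt₂ : natLength A N₂ < n := hn ▸ natLength_lt_of_ne_top fun h ↦
      h₁ (eq_bot_of_top_isCompl (h ▸ hc.symm))
    obtain ⟨X₁, Y₁, hXY₁, hX₁, hY₁⟩ := ih _ hlt₁ N₁ rfl
    obtain ⟨X₂, Y₂, hXY₂, hX₂, hY₂⟩ := ih _ hlt₂ N₂ rfl
    refine ⟨X₁.map N₁.subtype ⊔ X₂.map N₂.subtype, Y₁.map N₁.subtype ⊔ Y₂.map N₂.subtype, ?_,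
      hX₁.map.sup hX₂.map, hY₁.map.sup hY₂.map⟩
    rw [sup_sup_sup_comm, ← Submodule.map_sup, ← Submodule.map_sup, hXY₁, hXY₂,
      Submodule.map_subtype_top, Submodule.map_subtype_top, hc.sup_eq_top]

theorem IsArrowClosed.of_isSimpleModule (hNak : IsNakayama A) (hConn : IsConnectedAlgebra A)
    (hC : IsArrowClosed C) {S₀ : ModuleCat.{0} A} [IsSimpleModule A S₀] (hS₀ : C S₀)
    (S : ModuleCat.{0} A) [IsSimpleModule A S] : C S := by
  obtain ⟨X, Y, hXY, hX, hY⟩ := hC.exists_sup_eq_top hNak A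
  have hX' : SupportedOn (fun S ↦ ¬ ¬ C S) X := by simpa only [not_not] using hX
  have mul_eq_zero {X Y : Submodule A A} (h : ∀ f : Y →ₗ[A] X, f = 0) (x) (hx : x ∈ X) (y)
      (hy : y ∈ Y) : y * x = 0 :=
    congrArg Subtype.val <| LinearMap.congr_fun
      (h (LinearMap.toSpanSingleton A X ⟨x, hx⟩ ∘ₗ Y.subtype)) ⟨y, hy⟩
  obtain ⟨e, heX, heY, he, hec⟩ := exists_isIdempotentElem_mem_center (codisjoint_iff.2 hXY)
    (fun x hx y hy ↦ mul_eq_zero (hX.linearMap_eq_zero hY) y hy x hx)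
    (mul_eq_zero (hY.linearMap_eq_zero hX'))
  have prop_of_one_mem {D : ModuleCat.{0} A → Prop} {Z : Submodule A A} (hZ : SupportedOn D Z)
      (h1 : (1 : A) ∈ Z) (T : ModuleCat.{0} A) [IsSimpleModule A T] : D T := by
    have := IsSimpleModule.nontrivial A T
    obtain ⟨t, ht⟩ := exists_ne (0 : T)
    refine hZ.prop_of_surjective (LinearMap.toSpanSingleton A T t ∘ₗ Z.subtype)
      (LinearMap.surjective_of_ne_zero fun h0 ↦ ht ?_)
    simpa using LinearMap.congr_fun h0 ⟨1, h1⟩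
  rcases hConn.2 e he hec with rfl | rfl
  · exact absurd hS₀ (prop_of_one_mem hY (by simpa using heY) S₀)
  · exact prop_of_one_mem hX heX S

end Connected

section ProjectiveDimension

variable {A : Type u} [Ring A] {M N P : Type u} [AddCommGroup M] [Module A M]
  [AddCommGroup N] [Module A N] [AddCommGroup P] [Module A P]

/-- `M` has projective dimension less than `n`; `HasProjectiveDimensionLT` for unbundled modules. -/
abbrev HasProjDimLT (A : Type u) [Ring A] (M : Type u) [AddCommGroup M] [Module A M] (n : ℕ) :
    Prop :=
  HasProjectiveDimensionLT (ModuleCat.of A M) n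

theorem hasProjDimLT_zero_iff : HasProjDimLT A M 0 ↔ Subsingleton M := by
  rw [HasProjDimLT, hasProjectiveDimensionLT_zero_iff_isZero, ModuleCat.isZero_iff_subsingleton]

theorem hasProjDimLT_one_iff : HasProjDimLT A M 1 ↔ Module.Projective A M := by
  rw [HasProjDimLT, ← projective_iff_hasProjectiveDimensionLT_one, IsProjective.iff_projective]

theorem projective_finsupp (ι : Type u) [Module.Projective A P] : Module.Projective A (ι →₀ P) := by
  classical exact .of_equiv (finsuppLequivDFinsupp A).symm

theorem exact_mapRange_subtype_ker (ι : Type u) (f : P →ₗ[A] M) :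
    Function.Exact (Finsupp.mapRange.linearMap (α := ι) (LinearMap.ker f).subtype)
      (Finsupp.mapRange.linearMap (α := ι) f) := by
  rw [LinearMap.exact_iff, Finsupp.ker_mapRange,
    Finsupp.range_mapRange_linearMap _ (Submodule.ker_subtype _), Submodule.range_subtype]

theorem shortExact_mapRange (ι : Type u) {f : P →ₗ[A] M} (hf : Function.Surjective f) :
    (ModuleCat.shortComplexOfCompEqZero _ _
      (exact_mapRange_subtype_ker ι f).linearMap_comp_eq_zero).ShortExact :=
  ModuleCat.shortComplex_shortExact _ (exact_mapRange_subtype_ker ι f)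
    (Finsupp.mapRange_injective _ (map_zero _) (Submodule.subtype_injective _))
    (Finsupp.mapRange_surjective _ (map_zero f) hf)

namespace HasProjDimLT

variable {m n : ℕ}

theorem mono (_ : HasProjDimLT A M m) (hmn : m ≤ n) : HasProjDimLT A M n :=
  hasProjectiveDimensionLT_of_ge _ _ _ hmn

theorem of_linearEquiv (_ : HasProjDimLT A M n) (e : M ≃ₗ[A] N) : HasProjDimLT A N n :=
  hasProjectiveDimensionLT_of_iso e.toModuleIso n

theorem of_leftInverse (h : HasProjDimLT A N n) (i : M →ₗ[A] N) (r : N →ₗ[A] M)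
    (hri : r ∘ₗ i = LinearMap.id) : HasProjDimLT A M n :=
  Retract.hasProjectiveDimensionLT (Y := ModuleCat.of A N)
    ⟨ModuleCat.ofHom i, ModuleCat.ofHom r, by rw [← ModuleCat.ofHom_comp, hri]; rfl⟩ n

theorem of_ker {f : N →ₗ[A] M} (hf : Function.Surjective f)
    (hK : HasProjDimLT A (LinearMap.ker f) n) (hM : HasProjDimLT A M n) : HasProjDimLT A N n :=
  (LinearMap.shortExact_shortComplexKer hf).hasProjectiveDimensionLT_X₂ n hK hM

theorem ker_of_projective [Module.Projective A P] {f : P →ₗ[A] M} (hf : Function.Surjective f)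
    (h : HasProjDimLT A M (n + 2)) : HasProjDimLT A (LinearMap.ker f) (n + 1) :=
  (LinearMap.shortExact_shortComplexKer hf).hasProjectiveDimensionLT_X₁ (n + 1)
    ((hasProjDimLT_one_iff.2 ‹_›).mono (Nat.le_add_left 1 n)) h

theorem of_ker_of_projective [Module.Projective A P] {f : P →ₗ[A] M} (hf : Function.Surjective f)
    (h : HasProjDimLT A (LinearMap.ker f) n) : HasProjDimLT A M (n + 1) :=
  (LinearMap.shortExact_shortComplexKer hf).hasProjectiveDimensionLT_X₃ n h
    ((hasProjDimLT_one_iff.2 ‹_›).mono (Nat.le_add_left 1 n))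

theorem succ_iff_ker [IsUniserialModule A P] [Module.Projective A P] [Nontrivial M]
    {f : P →ₗ[A] M} (hf : Function.Surjective f) :
    HasProjDimLT A M (n + 1) ↔ HasProjDimLT A (LinearMap.ker f) n := by
  refine ⟨fun hM ↦ ?_, of_ker_of_projective hf⟩
  cases n with
  | zero =>
    have : Module.Projective A M := hasProjDimLT_one_iff.1 hM
    have hker := LinearMap.ker_eq_bot.2 (IsUniserialModule.injective_of_surjective hf)
    rw [hasProjDimLT_zero_iff, hker]
    infer_instance
  | succ n => exact hM.ker_of_projective hf

theorem finsupp (ι : Type u) (h : HasProjDimLT A M n) : HasProjDimLT A (ι →₀ M) n := by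
  induction n generalizing M with
  | zero =>
    rw [hasProjDimLT_zero_iff] at h ⊢
    infer_instance
  | succ n ih =>
    cases n with
    | zero =>
      rw [zero_add, hasProjDimLT_one_iff] at h ⊢
      exact projective_finsupp ι
    | succ n =>
      have hf := Finsupp.linearCombination_id_surjective A M
      exact (shortExact_mapRange ι hf).hasProjectiveDimensionLT_X₃ (n + 1)
        (ih (h.ker_of_projective hf))
        ((hasProjDimLT_one_iff.2 (projective_finsupp ι)).mono (Nat.le_add_left 1 _))

end HasProjDimLT

theorem exists_hasProjDimLT_of_finite [IsArtinianRing A]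
    (h : ∀ S : ModuleCat.{u} A, IsSimpleModule A S → ∃ n, HasProjDimLT A S n)
    (M : Type u) [AddCommGroup M] [Module A M] [Module.Finite A M] : ∃ n, HasProjDimLT A M n := by
  induction hn : natLength A M using Nat.strong_induction_on generalizing M with
  | _ n ih =>
  cases subsingleton_or_nontrivial M
  · exact ⟨0, hasProjDimLT_zero_iff.2 ‹_›⟩
  · obtain ⟨S, f, hS, hf⟩ := exists_surjective_isSimpleModule (A := A) (M := M)
    obtain ⟨s, hs⟩ := h S hS
    obtain ⟨k, hk⟩ := ih _
      (hn ▸ natLength_lt_of_ne_top (LinearMap.isCoatom_ker_of_surjective hf).1)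
      (LinearMap.ker f) rfl
    exact ⟨max k s, .of_ker hf (hk.mono (le_max_left _ _)) (hs.mono (le_max_right _ _))⟩

theorem isSemisimpleModule_quotient_jacobson [IsSemiprimaryRing A] :
    IsSemisimpleModule A (A ⧸ Ring.jacobson A) := by
  have : IsSemisimpleRing (A ⧸ Ring.jacobson A) := IsSemiprimaryRing.isSemisimpleRing
  have : RingHomSurjective (Ideal.Quotient.mk (Ring.jacobson A)) := ⟨Ideal.Quotient.mk_surjective⟩
  let toSelf : (A ⧸ Ring.jacobson A) →ₛₗ[Ideal.Quotient.mk (Ring.jacobson A)]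
      A ⧸ Ring.jacobson A :=
    { AddMonoidHom.id _ with
      map_smul' := fun r ↦ Ideal.Quotient.mk_surjective.forall.2 fun _ ↦ rfl }
  exact (toSelf.isSemisimpleModule_iff_of_bijective Function.bijective_id).2 inferInstance

/-- The map `A ⧸ rad A → M` sending `1` to an element `m` killed by the Jacobson radical. -/
def quotientJacobsonLift (m : M) (hm : ∀ a ∈ Ring.jacobson A, a • m = 0) :
    (A ⧸ Ring.jacobson A) →ₗ[A] M :=
  (Ring.jacobson A).liftQ (LinearMap.toSpanSingleton A M m) hm

theorem quotientJacobsonLift_one {m : M} (hm : ∀ a ∈ Ring.jacobson A, a • m = 0) :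
    quotientJacobsonLift m hm (Submodule.Quotient.mk 1) = m :=
  one_smul A m

/-- A semisimple module is a retract of a direct sum of copies of `A ⧸ rad A`. -/
theorem HasProjDimLT.of_isSemisimpleModule [IsSemiprimaryRing A] {n : ℕ}
    (h : HasProjDimLT A (A ⧸ Ring.jacobson A) n) [IsSemisimpleModule A M] : HasProjDimLT A M n := by
  have := isSemisimpleModule_quotient_jacobson (A := A)
  have jacobson_smul (m : M) (a : A) (ha : a ∈ Ring.jacobson A) : a • m = 0 :=
    Module.mem_annihilator.1 (IsSemisimpleModule.jacobson_le_annihilator A M ha) m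
  let f : (M →₀ (A ⧸ Ring.jacobson A)) →ₗ[A] M :=
    Finsupp.lsum ℕ fun m ↦ quotientJacobsonLift m (jacobson_smul m)
  have hf : Function.Surjective f := fun m ↦ ⟨Finsupp.single m (Submodule.Quotient.mk 1), by
    rw [Finsupp.lsum_single, quotientJacobsonLift_one]⟩
  obtain ⟨s, hs⟩ := IsSemisimpleModule.lifting_property f hf LinearMap.id
  exact (h.finsupp M).of_leftInverse s f hs

theorem exists_forall_hasProjDimLT [IsArtinianRing A]
    (h : ∀ S : ModuleCat.{u} A, IsSimpleModule A S → ∃ n, HasProjDimLT A S n) :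
    ∃ n, ∀ (M : Type u) [AddCommGroup M] [Module A M], HasProjDimLT A M n := by
  obtain ⟨n, hn⟩ := exists_hasProjDimLT_of_finite h (A ⧸ Ring.jacobson A)
  refine ⟨n, fun M _ _ ↦ IsSemiprimaryRing.induction A A M (P := fun M _ _ _ ↦ HasProjDimLT A M n)
    (fun M _ _ _ _ _ _ ↦ hn.of_isSemisimpleModule) fun M _ _ _ _ hJ hquot ↦ ?_⟩
  refine .of_ker (Submodule.mkQ_surjective _) ?_ hquot
  exact HasProjDimLT.of_linearEquiv hJ (LinearEquiv.ofEq _ _ (Submodule.ker_mkQ _).symm)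

theorem exists_submodule_quotient_jacobson_linearEquiv [IsSemiprimaryRing A] (S : Type u)
    [AddCommGroup S] [Module A S] [IsSimpleModule A S] :
    ∃ N : Submodule A (A ⧸ Ring.jacobson A), Nonempty (N ≃ₗ[A] S) := by
  have := isSemisimpleModule_quotient_jacobson (A := A)
  have := IsSimpleModule.nontrivial A S
  obtain ⟨s, hs⟩ := exists_ne (0 : S)
  let f := quotientJacobsonLift (A := A) s fun a ha ↦
    Module.mem_annihilator.1 (IsSemisimpleModule.jacobson_le_annihilator A S ha) s
  have hf : Function.Surjective f := LinearMap.surjective_of_ne_zero fun h0 ↦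
    hs ((quotientJacobsonLift_one _).symm.trans (LinearMap.congr_fun h0 _))
  obtain ⟨N, ⟨e⟩⟩ := IsSemisimpleModule.exists_submodule_linearEquiv_quotient (LinearMap.ker f)
  exact ⟨N, ⟨e ≪≫ₗ f.quotKerEquivOfSurjective hf⟩⟩

theorem exists_ne_nonempty_linearEquiv [IsArtinianRing A] {ι : Type*} [Infinite ι]
    (S : ι → ModuleCat.{u} A) [∀ i, IsSimpleModule A (S i)] :
    ∃ i j, i ≠ j ∧ Nonempty (S i ≃ₗ[A] S j) := by
  choose N e using fun i ↦ exists_submodule_quotient_jacobson_linearEquiv (A := A) (S i)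
  have (i : ι) : IsSimpleModule A (N i) := .congr (e i).some
  let component (i : ι) : isotypicComponents A (A ⧸ Ring.jacobson A) :=
    ⟨isotypicComponent A _ (N i), N i, inferInstance, rfl⟩
  obtain ⟨i, j, hij, h⟩ := Finite.exists_ne_map_eq_of_infinite component
  have hle : N i ≤ isotypicComponent A _ (N j) :=
    (N i).le_isotypicComponent.trans (congrArg Subtype.val h).le
  obtain ⟨u⟩ := isIsotypicOfType_submodule_iff.1
    (IsIsotypicOfType.isotypicComponent A (A ⧸ Ring.jacobson A) (N j)) (N i) hle
  exact ⟨i, j, hij, ⟨(e i).some.symm ≪≫ₗ u ≪≫ₗ (e j).some⟩⟩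

end ProjectiveDimension

section ProjDim

open ArtinAlg (ProjDimLE projDim)

variable {A : Type} [Ring A] {M : ModuleCat.{0} A} {n : ℕ}

theorem projDimLE_iff_hasProjectiveDimensionLE :
    ProjDimLE A n M ↔ HasProjectiveDimensionLE M n := by
  constructor
  · intro h
    induction h with
    | zero M h => exact (projective_iff_hasProjectiveDimensionLE_zero M).1 h
    | succ n M P f hP hf _ ih =>
      have hexact : (ShortComplex.mk _ _ (kernel.condition f)).ShortExact :=
        { exact := ShortComplex.exact_kernel f }
      exact hexact.hasProjectiveDimensionLT_X₃ (n + 1) ih inferInstance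
  · intro h
    induction n generalizing M with
    | zero => exact .zero M ((projective_iff_hasProjectiveDimensionLE_zero M).2 h)
    | succ n ih =>
      have hexact : (ShortComplex.mk _ _ (kernel.condition (Projective.π M))).ShortExact :=
        { exact := ShortComplex.exact_kernel _ }
      exact .succ n M _ (Projective.π M) inferInstance inferInstance
        (ih (hexact.hasProjectiveDimensionLT_X₁ (n + 1) inferInstance h))

theorem projDim_le_iff : projDim A M ≤ n ↔ HasProjectiveDimensionLE M n := by
  rw [← projDimLE_iff_hasProjectiveDimensionLE]
  refine ⟨fun h ↦ ?_, fun h ↦ sInf_le ⟨n, rfl, h⟩⟩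
  obtain ⟨_, ⟨m, rfl, hm⟩, hmn⟩ := sInf_lt_iff.1 (h.trans_lt ENat.natCast_lt_succ)
  rw [projDimLE_iff_hasProjectiveDimensionLE] at hm ⊢
  have hmn' : m < n + 1 := by exact_mod_cast hmn
  exact hasProjectiveDimensionLT_of_ge M (m + 1) (n + 1) hmn'

theorem hasProjDimLT_succ_and_not_of_projDim_eq [Nontrivial M] (h : projDim A M = n) :
    HasProjDimLT A M (n + 1) ∧ ¬ HasProjDimLT A M n := by
  refine ⟨projDim_le_iff.1 h.le, fun hn ↦ ?_⟩
  cases n with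
  | zero => exact not_subsingleton M (hasProjDimLT_zero_iff.1 hn)
  | succ n =>
    have : ((n + 1 : ℕ) : ℕ∞) ≤ n := h ▸ projDim_le_iff.2 hn
    exact absurd this (by exact_mod_cast Nat.not_succ_le_self n)

end ProjDim

section Acyclic

open ArtinAlg (IsNakayama IsConnectedAlgebra)

variable {A : Type} [Ring A] [IsArtinianRing A]

/-- No infinite path of the Ext-quiver starts at `S`. -/
def HasNoInfinitePath (S : ModuleCat.{0} A) : Prop :=
  Acc (fun T S : ModuleCat.{0} A ↦ IsSimpleModule A T ∧ HasArrow A S T) S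

theorem isArrowClosed_hasNoInfinitePath (hNak : IsNakayama A) :
    IsArrowClosed (A := A) HasNoInfinitePath := by
  have of_linearEquiv {S S' : ModuleCat.{0} A} (e : S ≃ₗ[A] S') (h : HasNoInfinitePath S) :
      HasNoInfinitePath S' :=
    .intro _ fun _ hT ↦ h.inv ⟨hT.1, hT.2.congr e.symm (.refl A _)⟩
  refine ⟨fun e ↦ ⟨of_linearEquiv e, of_linearEquiv e.symm⟩, fun {S T} _ hT hST ↦
    ⟨fun h ↦ h.inv ⟨hT, hST⟩, fun h ↦ .intro _ fun T' hT' ↦ ?_⟩⟩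
  have := hT'.1
  obtain ⟨e⟩ := hST.target_unique hNak hT'.2
  exact of_linearEquiv e h

theorem HasNoInfinitePath.exists_hasProjDimLT (hNak : IsNakayama A) {S : ModuleCat.{0} A}
    [hS : IsSimpleModule A S] (h : HasNoInfinitePath S) {M : ModuleCat.{0} A} [Module.Finite A M]
    [IsUniserialModule A M] {f : M →ₗ[A] S} (hf : Function.Surjective f) :
    ∃ n, HasProjDimLT A M n := by
  induction h generalizing hS M with
  | intro S _ ih =>
  have exists_ker {M : ModuleCat.{0} A} [Module.Finite A M] [IsUniserialModule A M]
      {f : M →ₗ[A] S} (hf : Function.Surjective f) : ∃ n, HasProjDimLT A (LinearMap.ker f) n := by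
    cases subsingleton_or_nontrivial (LinearMap.ker f)
    · exact ⟨0, hasProjDimLT_zero_iff.2 ‹_›⟩
    · obtain ⟨T, g, hT, hg⟩ := exists_surjective_isSimpleModule (A := A) (M := LinearMap.ker f)
      exact ih T ⟨hT, M, f, g, ‹_›, ‹_›, hf, hg⟩ (M := ModuleCat.of A (LinearMap.ker f)) hg
  obtain ⟨P, p, _, _, _, hp, -⟩ := exists_uniserial_cover (A := A) (S := S) hNak
  obtain ⟨m, hm⟩ := exists_ker hp
  obtain ⟨k, hk⟩ := exists_ker hf
  exact ⟨max k (m + 1), .of_ker hf (hk.mono (le_max_left _ _))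
    ((hm.of_ker_of_projective hp).mono (le_max_right _ _))⟩

theorem exists_hasProjDimLT_of_forall_not_hasArrow (hNak : IsNakayama A)
    (hConn : IsConnectedAlgebra A) {S₀ : ModuleCat.{0} A} [IsSimpleModule A S₀]
    (h : ∀ T : ModuleCat.{0} A, IsSimpleModule A T → ¬ HasArrow A S₀ T) (S : ModuleCat.{0} A)
    [IsSimpleModule A S] : ∃ n, HasProjDimLT A S n :=
  have hS₀ : HasNoInfinitePath S₀ := .intro _ fun T hT ↦ (h T hT.1 hT.2).elim
  have hS : HasNoInfinitePath S :=
    (isArrowClosed_hasNoInfinitePath hNak).of_isSimpleModule hNak hConn hS₀ S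
  hS.exists_hasProjDimLT hNak (f := LinearMap.id) Function.surjective_id

end Acyclic

section Cyclic

open ArtinAlg (IsNakayama IsConnectedAlgebra)

variable {A : Type} [Ring A]

theorem exists_path_of_forall_exists_hasArrow [Nontrivial A]
    (h : ∀ S : ModuleCat.{0} A, IsSimpleModule A S →
      ∃ T : ModuleCat.{0} A, IsSimpleModule A T ∧ HasArrow A S T) :
    ∃ S : ℕ → ModuleCat.{0} A, (∀ n, IsSimpleModule A (S n)) ∧
      ∀ n, HasArrow A (S n) (S (n + 1)) := by
  obtain ⟨S₀, -, hS₀, -⟩ := exists_surjective_isSimpleModule (A := A) (M := A)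
  choose next hnext harrow using h
  let path (n : ℕ) : {S : ModuleCat.{0} A // IsSimpleModule A S} :=
    n.rec ⟨S₀, hS₀⟩ fun _ S ↦ ⟨next S S.2, hnext S S.2⟩
  refine ⟨fun n ↦ (path n).1, fun n ↦ (path n).2, fun n ↦ ?_⟩
  exact harrow (path n).1 (path n).2

theorem nonempty_linearEquiv_mod {S : ℕ → ModuleCat.{0} A} {p : ℕ}
    (hp : ∀ n, Nonempty (S (n + p) ≃ₗ[A] S n)) (n : ℕ) : Nonempty (S n ≃ₗ[A] S (n % p)) := by
  have add_mul (r k : ℕ) : Nonempty (S (r + p * k) ≃ₗ[A] S r) := by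
    induction k with
    | zero => exact ⟨.refl A _⟩
    | succ k ih =>
      rw [Nat.mul_succ, ← add_assoc]
      exact ⟨(hp (r + p * k)).some ≪≫ₗ ih.some⟩
  have hn := add_mul (n % p) (n / p)
  rwa [Nat.mod_add_div] at hn

variable [IsArtinianRing A]

section Path

variable {S : ℕ → ModuleCat.{0} A} [∀ n, IsSimpleModule A (S n)]

theorem nonempty_linearEquiv_add_iff (hNak : IsNakayama A)
    (hS : ∀ n, HasArrow A (S n) (S (n + 1))) {a b : ℕ} (n : ℕ) :
    Nonempty (S (a + n) ≃ₗ[A] S (b + n)) ↔ Nonempty (S a ≃ₗ[A] S b) := by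
  induction n with
  | zero => rfl
  | succ n ih =>
    refine Iff.trans ⟨fun ⟨e⟩ ↦ ?_, fun ⟨e⟩ ↦ ?_⟩ ih
    · exact (hS (a + n)).source_unique hNak ((hS (b + n)).congr (.refl A _) e.symm)
    · exact (hS (a + n)).target_unique hNak ((hS (b + n)).congr e.symm (.refl A _))

theorem exists_nonempty_linearEquiv_add (hNak : IsNakayama A)
    (hS : ∀ n, HasArrow A (S n) (S (n + 1))) :
    ∃ p > 0, ∀ n, Nonempty (S (n + p) ≃ₗ[A] S n) := by
  obtain ⟨i, p, hp, ⟨e⟩⟩ : ∃ i p, 0 < p ∧ Nonempty (S (i + p) ≃ₗ[A] S i) := by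
    obtain ⟨i, j, hij, ⟨e⟩⟩ := exists_ne_nonempty_linearEquiv S
    rcases hij.lt_or_gt with hlt | hlt <;> obtain ⟨p, rfl⟩ := Nat.exists_eq_add_of_lt hlt
    · exact ⟨i, p + 1, p.succ_pos, ⟨e.symm⟩⟩
    · exact ⟨j, p + 1, p.succ_pos, ⟨e⟩⟩
  have h0 : Nonempty (S p ≃ₗ[A] S 0) :=
    (nonempty_linearEquiv_add_iff hNak hS i).1 (by rw [add_comm p, zero_add]; exact ⟨e⟩)
  refine ⟨p, hp, fun n ↦ ?_⟩
  have hn := (nonempty_linearEquiv_add_iff hNak hS n).2 h0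
  rwa [add_comm p, zero_add] at hn

theorem exists_linearEquiv_of_hasArrow (hNak : IsNakayama A) (hConn : IsConnectedAlgebra A)
    (hS : ∀ n, HasArrow A (S n) (S (n + 1))) {p : ℕ} (hp0 : 0 < p)
    (hp : ∀ n, Nonempty (S (n + p) ≃ₗ[A] S n)) (T : ModuleCat.{0} A) [IsSimpleModule A T] :
    ∃ n, Nonempty (T ≃ₗ[A] S n) := by
  have hC : IsArrowClosed fun T : ModuleCat.{0} A ↦ ∃ n, Nonempty (T ≃ₗ[A] S n) := by
    refine ⟨fun e ↦ exists_congr fun n ↦ ⟨fun ⟨u⟩ ↦ ⟨e.symm ≪≫ₗ u⟩, fun ⟨u⟩ ↦ ⟨e ≪≫ₗ u⟩⟩,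
      fun {T U} _ _ hTU ↦ ⟨fun ⟨n, ⟨e⟩⟩ ↦ ⟨n + 1, ?_⟩, fun ⟨n, ⟨e⟩⟩ ↦ ⟨n + p - 1, ?_⟩⟩⟩
    · exact hTU.target_unique hNak ((hS n).congr e.symm (.refl A _))
    · obtain ⟨u⟩ := hp n
      have hpred := hS (n + p - 1)
      rw [Nat.sub_add_cancel (by omega)] at hpred
      exact hTU.source_unique hNak (hpred.congr (.refl A _) (u ≪≫ₗ e.symm))
  exact hC.of_isSimpleModule hNak hConn (S₀ := S 0) ⟨0, ⟨.refl A _⟩⟩ T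

end Path

/-- The simple modules arranged along an oriented cycle of the Ext-quiver and indexed, periodically,
by its universal cover `ℤ`. -/
structure CyclicIndexing (A : Type) [Ring A] where
  /-- The length of the cycle. -/
  period : ℤ
  period_pos : 0 < period
  /-- The simple module at a vertex of the universal cover. -/
  simple : ℤ → ModuleCat.{0} A
  isSimpleModule (i : ℤ) : IsSimpleModule A (simple i)
  simple_add_period (i : ℤ) : simple (i + period) = simple i
  hasArrow (i : ℤ) : HasArrow A (simple i) (simple (i + 1))
  exists_linearEquiv (S : ModuleCat.{0} A) [IsSimpleModule A S] :
    ∃ i, Nonempty (S ≃ₗ[A] simple i)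

attribute [instance] CyclicIndexing.isSimpleModule

theorem nonempty_cyclicIndexing (hNak : IsNakayama A) (hConn : IsConnectedAlgebra A)
    (h : ∀ S : ModuleCat.{0} A, IsSimpleModule A S →
      ∃ T : ModuleCat.{0} A, IsSimpleModule A T ∧ HasArrow A S T) :
    Nonempty (CyclicIndexing A) := by
  have := hConn.1
  obtain ⟨S, _, hS⟩ := exists_path_of_forall_exists_hasArrow h
  obtain ⟨p, hp0, hp⟩ := exists_nonempty_linearEquiv_add hNak hS
  refine ⟨⟨p, by exact_mod_cast hp0, fun i ↦ S (i % p).toNat, fun i ↦ inferInstance,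
    fun i ↦ by rw [Int.add_emod_right], fun i ↦ ?_, fun T _ ↦ ?_⟩⟩
  · obtain ⟨e⟩ := nonempty_linearEquiv_mod hp ((i % p).toNat + 1)
    have hmod : ((i + 1) % p).toNat = ((i % p).toNat + 1) % p := by
      zify
      rw [Int.toNat_of_nonneg (Int.emod_nonneg _ (by omega)),
        Int.toNat_of_nonneg (Int.emod_nonneg _ (by omega)), Int.emod_add_emod]
    rw [hmod]
    exact (hS _).congr (.refl A _) e
  · obtain ⟨n, ⟨e⟩⟩ := exists_linearEquiv_of_hasArrow hNak hConn hS hp0 hp T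
    obtain ⟨u⟩ := nonempty_linearEquiv_mod hp n
    exact ⟨n, ⟨e ≪≫ₗ u⟩⟩

end Cyclic

section Combinatorics

open Function Set AddConstMap

variable {n : ℤ}

theorem add_zsmul_mem_range_iff {G H : Type*} [AddGroup G] [AddGroup H] {a : G} {b : H}
    (f : G →+c[a, b] H) (k : ℤ) {y : H} : y + k • b ∈ range f ↔ y ∈ range f := by
  refine ⟨fun ⟨x, hx⟩ ↦ ⟨x + (-k) • a, ?_⟩, fun ⟨x, hx⟩ ↦ ⟨x + k • a, ?_⟩⟩
  · rw [AddConstMapClass.map_add_zsmul, hx, add_assoc, ← add_zsmul, add_neg_cancel, zero_zsmul,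
      add_zero]
  · rw [AddConstMapClass.map_add_zsmul, hx]

theorem exists_forall_range_iterate_eq (f : ℤ →+c[n, n] ℤ) (hn : 0 < n) :
    ∃ M, ∀ m ≥ M, range f^[m] = range f^[M] := by
  let residues (m : ℕ) : Set (Ico 0 n) := Subtype.val ⁻¹' range f^[m]
  have residues_anti : Antitone residues := antitone_nat_of_succ_le fun m ↦
    preimage_mono (range_comp_subset_range f f^[m])
  obtain ⟨M, hM⟩ := WellFoundedLT.antitone_chain_condition residues_anti
  have mem_range_iff (m : ℕ) (y : ℤ) :
      y ∈ range f^[m] ↔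
        ⟨y % n, Int.emod_nonneg y hn.ne', Int.emod_lt_of_pos y hn⟩ ∈ residues m := by
    have h := add_zsmul_mem_range_iff (f ^ m) (y / n) (y := y % n)
    rwa [coe_pow, smul_eq_mul, mul_comm, Int.emod_add_mul_ediv] at h
  refine ⟨M, fun m hm ↦ ?_⟩
  ext y
  rw [mem_range_iff, mem_range_iff, hM m hm]

section Iterate

variable {f : ℤ → ℤ} {i y : ℤ} {k m : ℕ}

theorem iterate_add_one_eq_of_le (h : f^[k] (i + 1) = f^[k + 1] i) (hkm : k ≤ m) :
    f^[m] (i + 1) = f^[m + 1] i := by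
  obtain ⟨t, rfl⟩ := Nat.exists_eq_add_of_le' hkm
  rw [add_assoc, iterate_add_apply, h, ← iterate_add_apply]

theorem le_or_le_of_mem_range_iterate (hf : Monotone f) (h : f^[m] (i + 1) = f^[m + 1] i)
    (hy : y ∈ range f^[m]) : y ≤ f^[m] i ∨ f^[m + 1] i ≤ y := by
  obtain ⟨p, rfl⟩ := hy
  exact (le_or_gt p i).imp (fun hp ↦ hf.iterate m hp) fun hp ↦ h ▸ hf.iterate m hp

theorem exists_eq_iterate_of_le (hlt : ∀ x, x < f x)
    (hgap : ∀ t ≥ m, y ≤ f^[t] i ∨ f^[t + 1] i ≤ y) (hy : f^[m] i ≤ y) :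
    ∃ t ≥ m, y = f^[t] i := by
  by_contra! hne
  have iterate_le (t : ℕ) (ht : m ≤ t) : f^[t] i ≤ y := by
    induction t, ht using Nat.le_induction with
    | base => exact hy
    | succ t ht ih => exact (hgap t ht).resolve_left fun h ↦ hne t ht (h.antisymm ih)
  have iterate_strictMono : StrictMono fun t ↦ f^[m + t] i :=
    strictMono_nat_of_lt_succ fun t ↦ by
      rw [← add_assoc, iterate_succ_apply']
      exact hlt _
  exact iterate_strictMono.not_bddAbove_range_of_isSuccArchimedean
    ⟨y, forall_mem_range.2 fun t ↦ iterate_le _ (Nat.le_add_right m t)⟩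

end Iterate

/-- Once the ranges of the iterates have stabilised, the hypothesis says that `f` moves each element
of the stable range to the next one. -/
theorem exists_iterate_add_one_eq (f : ℤ →+c[n, n] ℤ) (hn : 0 < n) (hf : Monotone f)
    (hlt : ∀ x, x < f x) {i : ℤ} {k : ℕ} (h : f^[k] (i + 1) = f^[k + 1] i) (j : ℤ) :
    ∃ m, f^[m] (j + 1) = f^[m] j ∨ f^[m] (j + 1) = f^[m + 1] j := by
  obtain ⟨M, hM⟩ := exists_forall_range_iterate_eq f hn
  let m := max k M
  have gap {y : ℤ} (hy : y ∈ range f^[m]) (t : ℕ) (ht : t ≥ m) :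
      y ≤ f^[t] i ∨ f^[t + 1] i ≤ y := by
    refine le_or_le_of_mem_range_iterate hf
      (iterate_add_one_eq_of_le h ((le_max_left k M).trans ht)) ?_
    rwa [hM t ((le_max_right k M).trans ht), ← hM m (le_max_right k M)]
  have of_le {j : ℤ} (hj : f^[m] i ≤ f^[m] j) :
      f^[m] (j + 1) = f^[m] j ∨ f^[m] (j + 1) = f^[m + 1] j := by
    obtain ⟨t, ht, htj⟩ := exists_eq_iterate_of_le hlt (gap ⟨j, rfl⟩) hj
    have lower : f^[m] j ≤ f^[m] (j + 1) := hf.iterate m (Int.le_add_one le_rfl)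
    have upper : f^[m] (j + 1) ≤ f^[m + 1] j := hf.iterate m (hlt j)
    have succ_eq : f^[m + 1] j = f^[t + 1] i := by
      rw [iterate_succ_apply', htj, iterate_succ_apply']
    rw [succ_eq] at upper ⊢
    exact (gap ⟨j + 1, rfl⟩ t ht).imp (fun hle ↦ (hle.trans_eq htj.symm).antisymm lower)
      upper.antisymm
  obtain ⟨c, hc⟩ : ∃ c : ℤ, i ≤ j + c • n := by
    refine ⟨|i - j|, ?_⟩
    have := le_abs_self (i - j)
    have := le_mul_of_one_le_right (abs_nonneg (i - j)) hn
    rw [smul_eq_mul]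
    omega
  have translate (m : ℕ) (x : ℤ) : f^[m] (x + c • n) = f^[m] x + c • n := by
    simpa only [coe_pow] using AddConstMapClass.map_add_zsmul (f ^ m) x c
  refine ⟨m, ?_⟩
  simpa only [add_right_comm j (c • n) 1, translate, add_left_inj] using of_le (hf.iterate m hc)

end Combinatorics

section Interval

open Function
open scoped AddConstMap
open ArtinAlg (IsNakayama IsInjEnvOf projDim)

/-- If `f a` is the endpoint of the projective cover of a module `[a, b)` of the universal cover
`ℤ` of a cycle, then its syzygy is `[b, f a)`. So the `n`-th syzygy occupies the interval between
the `n`-th and the `(n + 1)`-st syzygy endpoint. -/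
def syzygyEndpoint (f : ℤ → ℤ) (a b : ℤ) : ℕ → ℤ
  | 0 => a
  | 1 => b
  | n + 2 => f (syzygyEndpoint f a b n)

section Endpoint

variable {f : ℤ → ℤ} {a b : ℤ}

theorem syzygyEndpoint_two_mul (k : ℕ) : syzygyEndpoint f a b (2 * k) = f^[k] a := by
  induction k with
  | zero => rfl
  | succ k ih => rw [iterate_succ_apply', ← ih, Nat.mul_succ, syzygyEndpoint]

theorem syzygyEndpoint_two_mul_add_one (k : ℕ) :
    syzygyEndpoint f a b (2 * k + 1) = f^[k] b := by
  induction k with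
  | zero => rfl
  | succ k ih => rw [iterate_succ_apply', ← ih, Nat.mul_succ, add_right_comm, syzygyEndpoint]

theorem syzygyEndpoint_succ (n : ℕ) :
    syzygyEndpoint f a b (n + 1) = syzygyEndpoint f b (f a) n := by
  induction n using Nat.twoStepInduction with
  | zero => rfl
  | one => rfl
  | more n ih _ => rw [syzygyEndpoint, syzygyEndpoint, ih]

end Endpoint

namespace CyclicIndexing

variable {A : Type} [Ring A] (C : CyclicIndexing A) {M N P : Type} [AddCommGroup M] [Module A M]
  [AddCommGroup N] [Module A N] [AddCommGroup P] [Module A P] {a b c : ℤ}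

/-- The endpoint `i + ℓ` of the projective cover of `C.simple i`, where `ℓ` is its length. -/
def coverEnd : ℤ →+c[C.period, C.period] ℤ where
  toFun i := i + coverLength A (C.simple i)
  map_add_const' i := by rw [C.simple_add_period, add_right_comm]

/-- `M` is uniserial with composition factors `C.simple a, …, C.simple (b - 1)`, from the top to the
socle. Only the top is recorded, since it determines the other factors. -/
structure IsInterval (a b : ℤ) (M : Type) [AddCommGroup M] [Module A M] : Prop where
  finite : Module.Finite A M
  isUniserialModule : IsUniserialModule A M
  add_natLength : a + natLength A M = b
  exists_surjective : a ≠ b → ∃ g : M →ₗ[A] C.simple a, Surjective g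

namespace IsInterval

variable {C}

theorem le (h : C.IsInterval a b M) : a ≤ b := by
  have := h.add_natLength
  omega

theorem of_linearEquiv (h : C.IsInterval a b M) (e : M ≃ₗ[A] N) : C.IsInterval a b N where
  finite := have := h.finite; .equiv e
  isUniserialModule := have := h.isUniserialModule; .of_surjective e.toLinearMap e.surjective
  add_natLength := natLength_congr e ▸ h.add_natLength
  exists_surjective hab :=
    let ⟨g, hg⟩ := h.exists_surjective hab
    ⟨g ∘ₗ e.symm.toLinearMap, hg.comp e.symm.surjective⟩

theorem of_isSimpleModule {S : Type} [AddCommGroup S] [Module A S] [IsSimpleModule A S] {i : ℤ}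
    (e : S ≃ₗ[A] C.simple i) : C.IsInterval i (i + 1) S where
  finite := inferInstance
  isUniserialModule := inferInstance
  add_natLength := by rw [natLength_of_isSimpleModule, Nat.cast_one]
  exists_surjective _ := ⟨e.toLinearMap, e.surjective⟩

theorem exists_surjective_of_projective (h : C.IsInterval a b M) (hab : a ≠ b)
    [Module.Projective A P] {p : P →ₗ[A] C.simple a} (hp : Surjective p) :
    ∃ q : P →ₗ[A] M, Surjective q := by
  have := h.isUniserialModule
  have := IsSimpleModule.nontrivial A (C.simple a)
  obtain ⟨g, hg⟩ := h.exists_surjective hab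
  obtain ⟨q, hq⟩ := Module.projective_lifting_property g p hg
  refine ⟨q, IsUniserialModule.surjective_of_comp_ne_zero (f := g) fun h0 ↦ ?_⟩
  obtain ⟨s, hs⟩ := exists_ne (0 : C.simple a)
  obtain ⟨x, rfl⟩ := hp s
  exact hs (by rw [← hq, h0, LinearMap.zero_apply])

variable [IsArtinianRing A]

theorem eq_iff_subsingleton (h : C.IsInterval a b M) : a = b ↔ Subsingleton M := by
  have := h.finite
  rw [← natLength_eq_zero_iff (A := A), ← h.add_natLength]
  omega

theorem nontrivial (h : C.IsInterval a b M) (hab : a ≠ b) : Nontrivial M :=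
  not_subsingleton_iff_nontrivial.1 (h.eq_iff_subsingleton.not.1 hab)

theorem ker_simple (hNak : IsNakayama A) (h : C.IsInterval a b M) {g : M →ₗ[A] C.simple a}
    (hg : Surjective g) : C.IsInterval (a + 1) b (LinearMap.ker g) := by
  have := h.finite
  have := h.isUniserialModule
  have hlen : a + 1 + natLength A (LinearMap.ker g) = b := by
    have := natLength_eq_ker_add hg
    have := h.add_natLength
    rw [natLength_of_isSimpleModule (A := A) (M := C.simple a)] at *
    omega
  refine ⟨inferInstance, inferInstance, hlen, fun hab ↦ ?_⟩
  have : Nontrivial (LinearMap.ker g) := by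
    rw [← not_subsingleton_iff_nontrivial, ← natLength_eq_zero_iff (A := A)]
    omega
  obtain ⟨T, u, hT, hu⟩ := exists_surjective_isSimpleModule (A := A) (M := LinearMap.ker g)
  have harrow : HasArrow A (C.simple a) T := ⟨ModuleCat.of A M, g, u, ‹_›, ‹_›, hg, hu⟩
  obtain ⟨e⟩ := harrow.target_unique hNak (C.hasArrow a)
  exact ⟨e.toLinearMap ∘ₗ u, e.surjective.comp hu⟩

theorem submodule (hNak : IsNakayama A) (h : C.IsInterval a b M) (K : Submodule A M) :
    C.IsInterval (b - natLength A K) b K := by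
  have := h.finite
  induction hn : natLength A M using Nat.strong_induction_on generalizing a M with
  | _ n ih =>
  by_cases hK : K = ⊤
  · subst hK
    have := natLength_congr (Submodule.topEquiv (R := A) (M := M))
    have := h.add_natLength
    have hab : b - natLength A (⊤ : Submodule A M) = a := by omega
    exact hab ▸ h.of_linearEquiv Submodule.topEquiv.symm
  · have := h.isUniserialModule
    have hlt := natLength_lt_of_ne_top hK
    obtain ⟨g, hg⟩ := h.exists_surjective (by have := h.add_natLength; omega)
    have e := Submodule.comapSubtypeEquivOfLe (IsUniserialModule.le_ker_of_ne_top hg hK)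
    rw [← natLength_congr e]
    exact (ih _ (hn ▸ natLength_lt_of_ne_top (LinearMap.isCoatom_ker_of_surjective hg).1)
      (h.ker_simple hNak hg) _ inferInstance rfl).of_linearEquiv e

theorem ker (hNak : IsNakayama A) (hM : C.IsInterval a c M) (hN : C.IsInterval a b N)
    {q : M →ₗ[A] N} (hq : Surjective q) : C.IsInterval b c (LinearMap.ker q) := by
  have := hM.finite
  have hlen : c - natLength A (LinearMap.ker q) = b := by
    have := natLength_eq_ker_add hq
    have := hM.add_natLength
    have := hN.add_natLength
    omega
  exact hlen ▸ hM.submodule hNak (LinearMap.ker q)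

end IsInterval

variable [IsArtinianRing A]

theorem exists_cover (hNak : IsNakayama A) (a : ℤ) :
    ∃ (P : ModuleCat.{0} A) (p : P →ₗ[A] C.simple a), Module.Projective A P ∧ Surjective p ∧
      C.IsInterval a (C.coverEnd a) P :=
  let ⟨P, p, hfin, hproj, huni, hp, hlen⟩ := exists_uniserial_cover (S := C.simple a) hNak
  ⟨P, p, hproj, hp, hfin, huni, by rw [hlen]; rfl, fun _ ↦ ⟨p, hp⟩⟩

theorem lt_coverEnd (hNak : IsNakayama A) (a : ℤ) : a < C.coverEnd a := by
  obtain ⟨P, p, -, hp, hP⟩ := C.exists_cover hNak a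
  have := IsSimpleModule.nontrivial A (C.simple a)
  have := hp.nontrivial
  exact hP.le.lt_of_ne (hP.eq_iff_subsingleton.not.2 (not_subsingleton P))

theorem coverEnd_monotone (hNak : IsNakayama A) : Monotone C.coverEnd := by
  refine monotone_int_of_le_succ fun a ↦ ?_
  obtain ⟨P, p, -, hp, hP⟩ := C.exists_cover hNak a
  obtain ⟨Q, u, _, hu, hQ⟩ := C.exists_cover hNak (a + 1)
  have hrad := hP.ker_simple hNak hp
  obtain heq | hne := eq_or_ne (a + 1) (C.coverEnd a)
  · exact heq ▸ (C.lt_coverEnd hNak (a + 1)).le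
  · obtain ⟨q, hq⟩ := hrad.exists_surjective_of_projective hne hu
    exact (hQ.ker hNak hrad hq).le

namespace IsInterval

variable {C}

theorem exists_surjective_of_le (hNak : IsNakayama A) (hM : C.IsInterval a c M)
    (hN : C.IsInterval a b N) (hbc : b ≤ c) : ∃ g : M →ₗ[A] N, Surjective g := by
  obtain rfl | hab := eq_or_ne a b
  · have := hN.eq_iff_subsingleton.1 rfl
    exact ⟨0, surjective_to_subsingleton _⟩
  obtain ⟨P, p, _, hp, hP⟩ := C.exists_cover hNak a
  obtain ⟨q, hq⟩ := hM.exists_surjective_of_projective (hN.le.lt_of_ne hab |>.trans_le hbc).ne hp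
  obtain ⟨r, hr⟩ := hN.exists_surjective_of_projective hab hp
  have hker : LinearMap.ker q ≤ LinearMap.ker r := by
    have := hP.finite
    have := hP.isUniserialModule
    have := (hP.ker hNak hM hq).add_natLength
    have := (hP.ker hNak hN hr).add_natLength
    exact IsUniserialModule.le_of_natLength_le (by omega)
  obtain ⟨g, rfl⟩ := exists_comp_eq_of_ker_le hq hker
  exact ⟨g, .of_comp hr⟩

theorem coverEnd_sub_one_lt (hNak : IsNakayama A) [Module.Injective A M]
    (h : C.IsInterval a b M) (hab : a ≠ b) : C.coverEnd (a - 1) < b := by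
  by_contra! hle
  have : Nontrivial M := h.nontrivial hab
  obtain ⟨P, p, -, hp, hP⟩ := C.exists_cover hNak (a - 1)
  have := hP.isUniserialModule
  have hrad := hP.ker_simple hNak hp
  rw [sub_add_cancel] at hrad
  obtain ⟨g, hg⟩ := hrad.exists_surjective_of_le hNak h hle
  exact IsUniserialModule.not_surjective_of_ne_top (LinearMap.isCoatom_ker_of_surjective hp).1 g hg

theorem hasProjDimLT_iff (hNak : IsNakayama A) {n : ℕ} (h : C.IsInterval a b M) :
    HasProjDimLT A M n ↔
      ∃ i ≤ n, syzygyEndpoint C.coverEnd a b i = syzygyEndpoint C.coverEnd a b (i + 1) := by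
  induction n generalizing a b M with
  | zero =>
    rw [hasProjDimLT_zero_iff, ← h.eq_iff_subsingleton]
    simp only [nonpos_iff_eq_zero, exists_eq_left, syzygyEndpoint]
  | succ n ih =>
    obtain rfl | hab := eq_or_ne a b
    · have := h.eq_iff_subsingleton.1 rfl
      exact iff_of_true ((hasProjDimLT_zero_iff.2 this).mono (Nat.zero_le _))
        ⟨0, Nat.zero_le _, rfl⟩
    · obtain ⟨P, p, _, hp, hP⟩ := C.exists_cover hNak a
      obtain ⟨q, hq⟩ := h.exists_surjective_of_projective hab hp
      have := hP.isUniserialModule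
      have : Nontrivial M := h.nontrivial hab
      rw [HasProjDimLT.succ_iff_ker hq, ih (hP.ker hNak h hq)]
      simp only [← syzygyEndpoint_succ]
      constructor
      · exact fun ⟨i, hi, heq⟩ ↦ ⟨i + 1, Nat.succ_le_succ hi, heq⟩
      · rintro ⟨_ | i, hi, heq⟩
        · exact absurd heq hab
        · exact ⟨i, Nat.le_of_succ_le_succ hi, heq⟩

end IsInterval
end CyclicIndexing
end Interval

section CyclicQuiver

open ArtinAlg (IsNakayama IsInjEnvOf projDim)
open Function

variable {A : Type} [Ring A]

theorem isUniserialModule_of_isInjEnvOf (hNak : IsNakayama A) {S I : ModuleCat.{0} A}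
    [IsSimpleModule A S] (hI : IsInjEnvOf A S I) : IsUniserialModule A I := by
  obtain ⟨φ, -, hmono, hess⟩ := hI
  have hφ : Injective φ.hom := (ModuleCat.mono_iff_injective φ).1 hmono
  have := IsSimpleModule.nontrivial A S
  have hrange : LinearMap.range φ.hom ≠ ⊥ := by
    rw [ne_eq, LinearMap.range_eq_bot]
    exact fun hzero ↦ not_subsingleton S ⟨fun x y ↦ hφ (by rw [hzero]; rfl)⟩
  refine isUniserialModule_of_forall_le hNak hrange fun K hK ↦ ?_
  rw [← K.ker_mkQ, LinearMap.range_le_ker_iff]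
  by_contra hne
  have hinj : Injective (K.mkQ ∘ₗ φ.hom) := LinearMap.injective_of_ne_zero hne
  have hmkQ := hess _ (ModuleCat.ofHom K.mkQ) ((ModuleCat.mono_iff_injective _).2 hinj)
  have hker := LinearMap.ker_eq_bot.2 ((ModuleCat.mono_iff_injective _).1 hmkQ)
  exact hK (K.ker_mkQ ▸ hker)

namespace CyclicIndexing

variable [IsArtinianRing A] (C : CyclicIndexing A)

theorem exists_isInterval (M : Type) [AddCommGroup M] [Module A M] [Module.Finite A M]
    [Nontrivial M] [IsUniserialModule A M] : ∃ a b, a ≠ b ∧ C.IsInterval a b M := by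
  obtain ⟨S, g, _, hg⟩ := exists_surjective_isSimpleModule (A := A) (M := M)
  obtain ⟨a, ⟨e⟩⟩ := C.exists_linearEquiv S
  have h : C.IsInterval a (a + natLength A M) M :=
    ⟨inferInstance, inferInstance, rfl, fun _ ↦ ⟨e.toLinearMap ∘ₗ g, e.surjective.comp hg⟩⟩
  exact ⟨a, _, h.eq_iff_subsingleton.not.2 (not_subsingleton M), h⟩

variable {C}

theorem IsInterval.syzygyEndpoint_eq_of_projDim_eq (hNak : IsNakayama A) {M : ModuleCat.{0} A}
    {a b : ℤ} (h : C.IsInterval a b M) (hab : a ≠ b) {n : ℕ} (hn : projDim A M = n) :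
    syzygyEndpoint C.coverEnd a b (n + 1) = syzygyEndpoint C.coverEnd a b (n + 2) := by
  have : Nontrivial M := h.nontrivial hab
  obtain ⟨hlt, hnot⟩ := hasProjDimLT_succ_and_not_of_projDim_eq hn
  rw [h.hasProjDimLT_iff hNak] at hlt hnot
  obtain ⟨i, hi, heq⟩ := hlt
  obtain rfl : i = n + 1 := hi.antisymm (not_le.1 fun hle ↦ hnot ⟨i, hle, heq⟩)
  exact heq

variable (C)

theorem exists_iterate_eq_of_even (hNak : IsNakayama A) (S : ModuleCat.{0} A) [IsSimpleModule A S]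
    {n : ℕ} (hn : projDim A S = n) (heven : Even n) :
    ∃ i k, C.coverEnd^[k] (i + 1) = C.coverEnd^[k + 1] i := by
  obtain ⟨i, ⟨e⟩⟩ := C.exists_linearEquiv S
  obtain ⟨k, rfl⟩ := even_iff_exists_two_mul.1 heven
  have heq := (IsInterval.of_isSimpleModule e).syzygyEndpoint_eq_of_projDim_eq hNak
    (lt_add_one i).ne hn
  rw [syzygyEndpoint_two_mul_add_one, ← Nat.mul_succ, syzygyEndpoint_two_mul] at heq
  exact ⟨i, k, heq⟩

theorem exists_iterate_eq_of_odd (hNak : IsNakayama A) (I : ModuleCat.{0} A) [Module.Finite A I]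
    [Nontrivial I] [IsUniserialModule A I] [Module.Injective A I] {n : ℕ} (hn : projDim A I = n)
    (hodd : Odd n) : ∃ i k, C.coverEnd^[k] (i + 1) = C.coverEnd^[k + 1] i := by
  obtain ⟨a, b, hab, h⟩ := C.exists_isInterval I
  obtain ⟨k, rfl⟩ := hodd
  have heq : C.coverEnd^[k + 1] a = C.coverEnd^[k + 1] b := by
    rw [← syzygyEndpoint_two_mul (b := b), ← syzygyEndpoint_two_mul_add_one (a := a)]
    exact h.syzygyEndpoint_eq_of_projDim_eq hNak hab hn
  have hmono := (C.coverEnd_monotone hNak).iterate (k + 1)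
  have upper : a ≤ C.coverEnd (a - 1) := Int.sub_one_lt_iff.1 (C.lt_coverEnd hNak (a - 1))
  have lower : C.coverEnd (a - 1) ≤ b := (h.coverEnd_sub_one_lt hNak hab).le
  refine ⟨a - 1, k + 1, ?_⟩
  rw [sub_add_cancel, iterate_succ_apply]
  exact (hmono upper).antisymm ((hmono lower).trans_eq heq.symm)

theorem exists_hasProjDimLT (hNak : IsNakayama A) {i : ℤ} {k : ℕ}
    (h : C.coverEnd^[k] (i + 1) = C.coverEnd^[k + 1] i) (S : ModuleCat.{0} A)
    [IsSimpleModule A S] : ∃ n, HasProjDimLT A S n := by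
  obtain ⟨j, ⟨e⟩⟩ := C.exists_linearEquiv S
  simp only [(IsInterval.of_isSimpleModule e).hasProjDimLT_iff hNak]
  obtain ⟨m, hm | hm⟩ := exists_iterate_add_one_eq C.coverEnd C.period_pos
    (C.coverEnd_monotone hNak) (C.lt_coverEnd hNak) h j
  · refine ⟨2 * m, 2 * m, le_rfl, ?_⟩
    rw [syzygyEndpoint_two_mul, syzygyEndpoint_two_mul_add_one, hm]
  · refine ⟨2 * m + 1, 2 * m + 1, le_rfl, ?_⟩
    rw [syzygyEndpoint_two_mul_add_one, add_assoc, ← Nat.mul_succ, syzygyEndpoint_two_mul, hm]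

theorem exists_iterate_eq (hNak : IsNakayama A) {S I : ModuleCat.{0} A} [IsSimpleModule A S]
    (hI : IsInjEnvOf A S I)
    (h : (∃ n : ℕ, projDim A S = n ∧ Even n) ∨ (∃ n : ℕ, projDim A I = n ∧ Odd n)) :
    ∃ i k, C.coverEnd^[k] (i + 1) = C.coverEnd^[k + 1] i := by
  obtain ⟨n, hn, heven⟩ | ⟨n, hn, hodd⟩ := h
  · exact C.exists_iterate_eq_of_even hNak S hn heven
  · have := isUniserialModule_of_isInjEnvOf hNak hI
    obtain ⟨φ, hinj, hmono, -⟩ := hI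
    have := IsSimpleModule.nontrivial A S
    have : Nontrivial I := ((ModuleCat.mono_iff_injective φ).1 hmono).nontrivial
    have : IsNoetherian A I := IsUniserialModule.isNoetherian
    have : Module.Injective A I := Module.injective_module_of_injective_object A I
    exact C.exists_iterate_eq_of_odd hNak I hn hodd

end CyclicIndexing

end CyclicQuiver

end NakayamaAlgebra

open ArtinAlg NakayamaAlgebra in
theorem statement_13_general (A : Type) [Ring A] [IsArtinianRing A]
    (hNak : IsNakayama A) (hConn : IsConnectedAlgebra A)
    (S : ModuleCat.{0} A) (hS : IsSimpleModule A ↥S)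
    (I : ModuleCat.{0} A) (hI : IsInjEnvOf A S I)
    (h : (∃ n : ℕ, projDim A S = n ∧ Even n) ∨ (∃ n : ℕ, projDim A I = n ∧ Odd n)) :
    ∃ n : ℕ, ∀ M : ModuleCat.{0} A, projDim A M ≤ n := by
  suffices hsimple : ∀ T : ModuleCat.{0} A, IsSimpleModule A T → ∃ n, HasProjDimLT A T n by
    obtain ⟨n, hn⟩ := exists_forall_hasProjDimLT hsimple
    exact ⟨n, fun M ↦ projDim_le_iff.2 ((hn M).mono (Nat.le_succ n))⟩
  intro T hT
  by_cases hout : ∀ U : ModuleCat.{0} A, IsSimpleModule A U →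
      ∃ V : ModuleCat.{0} A, IsSimpleModule A V ∧ HasArrow A U V
  · obtain ⟨C⟩ := nonempty_cyclicIndexing hNak hConn hout
    obtain ⟨i, k, hik⟩ := C.exists_iterate_eq hNak hI h
    exact C.exists_hasProjDimLT hNak hik T
  · push Not at hout
    obtain ⟨U, hU, hsink⟩ := hout
    exact exists_hasProjDimLT_of_forall_not_hasArrow hNak hConn hsink T

open ArtinAlg in
/-- Let `A` be a connected Nakayama algebra. If there exists a simple
module `S` such that `pd S` is finite and even, or such that `pd (I S)` is finite and
odd, then `A` has finite global dimension. -/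
theorem statement_13 (R : Type) [CommRing R] [IsArtinianRing R]
    (A : Type) [Ring A] [Algebra R A] [Module.Finite R A]
    (hNak : IsNakayama A) (hConn : IsConnectedAlgebra A)
    (S : ModuleCat.{0} A) (hS : IsSimpleModule A ↥S)
    (I : ModuleCat.{0} A) (hI : IsInjEnvOf A S I)
    (h : (∃ n : ℕ, projDim A S = n ∧ Even n) ∨ (∃ n : ℕ, projDim A I = n ∧ Odd n)) :
    ∃ n : ℕ, ∀ M : ModuleCat.{0} A, projDim A M ≤ n :=
  have : IsArtinianRing A := .of_finite R A
  statement_13_general A hNak hConn S hS I hI h
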